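/- arXiv:2302.09773 — 4 statements merged into one kernel-verified Lean document; each statement's English description precedes it below -/
import Mathlib

section
/- Let 1 ≤ s ≤ N, 1 ≤ t ≤ n − 1 with t even, and set P = x11^{2s}χ11^t, Q = x11^{2s}χ22^t, R = x12^{2s}χ12^t, T = x12^{2s}χ21^t in A = A_{Nn}^{μλ}. For scalars a1, a2, a3, b1, b2, b3, d1, d2, d3, e1, e2, e3 ∈ k put y = a1·P + (1−a1)·Q + a2·R + a3·T, z = b1·P + (1−b1)·Q + b2·R + b3·T, u = d1·P − d1·Q + d2·R + d3·T, v = e1·P − e1·Q + e2·R + e3·T. Then: (i) y·u = 0 iff (1−2a1)d1 = 0, a2d3 + a3d2 = 0, and, when 2t ≠ n, also d1 = 0, a2d2 = 0, a3d3 = 0, while when 2t = n, also a2d2 + λ·a3d3 = 0; (ii) z·u = 0 iff the same conditions hold with (a1,a2,a3) replaced by (b1,b2,b3); (iii) y·v = 0 iff the conditions of (i) hold with (d1,d2,d3) replaced by (e1,e2,e3); (iv) z·v = 0 iff the conditions of (i) hold with (a1,a2,a3) replaced by (b1,b2,b3) and (d1,d2,d3) replaced by (e1,e2,e3). -/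
/-!
The relations `x_{ij} x_{kl} = 0` for `i + j + k + l` odd split `A` into two blocks, generated by
`{x₁₁, x₂₂}` and by `{x₁₂, x₂₁}`, which annihilate each other. The power `x₁₁^{2N}` acts as the
identity on the first block and kills the second, so `y * u` vanishes iff both of its block
components vanish.

Each block is generated by two elements `a`, `b` with `a² = b²`, `a^{2N+1} = ν a` and
`χ_b^n = c χ_a^n`, where `ν² = c² = 1`. For `t = 2h` one has `χ_a^t = (ab)^h`, `χ_b^t = (ba)^h`,
and `(ab)^h (ba)^h = a^{2t}`. Hence a product of two combinations of `P = a^{2s} (ab)^h` and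
`Q = a^{2s} (ba)^h` is a combination of `P² = a^{4s} (ab)^t`, `Q² = a^{4s} (ba)^t` and
`PQ = QP = a^{4s+2t}`. Up to signs these are basis elements, because the relation `(ab)^n = c a^{2n}`
(`ab_pow_n`) allows one to rewrite `(ab)^t` through `(ba)^{n-t}` when `2t > n` (`long_word`).
They are distinct if `2t ≠ n`, while for `2t = n` the only coincidence is `Q² = c P²`. The lemma
`block` records the resulting criterion for one block, and the theorem combines its two instances.
-/


open scoped TensorProduct

noncomputable section

/-- The alternating product `x i j * x (i+1) (j+1) * x i j * ⋯` with `m` factors,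
    i.e. `χ_{ij}^m` for the Suzuki presentation (indices taken in `Fin 2`). -/
def chi {A : Type*} [Ring A] (x : Fin 2 → Fin 2 → A) : Fin 2 → Fin 2 → ℕ → A
  | _, _, 0 => 1
  | i, j, (m + 1) => x i j * chi x (i + 1) (j + 1) (m)

/-- A presentation of the Suzuki Hopf algebra `A_{Nn}^{μλ}` over `k`:
`x 0 0 = x₁₁`, `x 0 1 = x₁₂`, `x 1 0 = x₂₁`, `x 1 1 = x₂₂`. -/
structure Suzuki (k A : Type*) [Field k] [CharZero k] [IsAlgClosed k]
    [Ring A] [HopfAlgebra k A] where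
  N : ℕ
  n : ℕ
  hN : 1 ≤ N
  hn : 2 ≤ n
  μ : k
  lam : k
  hμ : μ = 1 ∨ μ = -1
  hlam : lam = 1 ∨ lam = -1
  x : Fin 2 → Fin 2 → A
  gen : Algebra.adjoin k (Set.range fun p : Fin 2 × Fin 2 => x p.1 p.2) = ⊤
  rel_sq1 : x 0 0 ^ 2 = x 1 1 ^ 2
  rel_sq2 : x 0 1 ^ 2 = x 1 0 ^ 2
  rel_chi1 : chi x 1 0 n = lam • chi x 0 1 n
  rel_chi2 : chi x 0 0 n = chi x 1 1 n
  rel_mu : x 0 0 ^ (2 * N) + μ • x 0 1 ^ (2 * N) = 1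
  rel_odd : ∀ i j i' j' : Fin 2, Odd ((i : ℕ) + j + i' + j') → x i j * x i' j' = 0
  comul_chi : ∀ (i j : Fin 2) (m : ℕ), 1 ≤ m →
    Coalgebra.comul (R := k) (chi x i j m)
      = chi x i 0 m ⊗ₜ[k] chi x 0 j m + chi x i 1 m ⊗ₜ[k] chi x 1 j m
  counit_x : ∀ i j : Fin 2,
    Coalgebra.counit (R := k) (x i j) = if i = j then (1 : k) else 0
  antipode_x : ∀ i j : Fin 2,
    HopfAlgebra.antipode (R := k) (x i j) = x j i ^ (4 * N - 1)
  basis_indep : LinearIndependent k (fun p : Fin 2 × Fin (2 * N) × Fin n =>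
      if p.1 = 0 then x 0 0 ^ ((p.2.1 : ℕ) + 1) * chi x 1 1 (p.2.2 : ℕ)
      else x 0 1 ^ ((p.2.1 : ℕ) + 1) * chi x 1 0 (p.2.2 : ℕ))
  basis_span : Submodule.span k (Set.range fun p : Fin 2 × Fin (2 * N) × Fin n =>
      if p.1 = 0 then x 0 0 ^ ((p.2.1 : ℕ) + 1) * chi x 1 1 (p.2.2 : ℕ)
      else x 0 1 ^ ((p.2.1 : ℕ) + 1) * chi x 1 0 (p.2.2 : ℕ)) = ⊤

/-- A Hopf algebra automorphism of `A`: a bijective `k`-linear map `A → A` that is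
both an algebra homomorphism and a coalgebra homomorphism. -/
def IsHopfAut (k : Type*) {A : Type*} [Field k] [Ring A] [HopfAlgebra k A]
    (ψ : A ≃ₗ[k] A) : Prop :=
  (∀ a b : A, ψ (a * b) = ψ a * ψ b) ∧ ψ 1 = 1 ∧
  (∀ a : A, Coalgebra.comul (R := k) (ψ a)
      = TensorProduct.map ψ.toLinearMap ψ.toLinearMap (Coalgebra.comul (R := k) a)) ∧
  (∀ a : A, Coalgebra.counit (R := k) (ψ a) = Coalgebra.counit (R := k) a)

/-! ### Alternating words in two generators with equal squares -/

/-- The alternating product `a * b * a * ⋯` with `m` factors. -/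
def alt {A : Type*} [Ring A] : A → A → ℕ → A
  | _, _, 0 => 1
  | a, b, (m + 1) => a * alt b a m

lemma chi_eq_alt {A : Type*} [Ring A] (x : Fin 2 → Fin 2 → A) (m : ℕ) :
    ∀ i j : Fin 2, chi x i j m = alt (x i j) (x (i + 1) (j + 1)) m := by
  induction m with
  | zero => intro i j; rfl
  | succ m ih =>
    intro i j
    have h : ∀ i : Fin 2, i + 1 + 1 = i := by decide
    rw [chi, alt, ih, h, h]

section Words

variable {A : Type*} [Ring A] {a b : A}

lemma alt_even (a b : A) (h : ℕ) : alt a b (2 * h) = (a * b) ^ h := by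
  induction h with
  | zero => simp [alt]
  | succ h ih =>
    rw [show 2 * (h + 1) = 2 * h + 1 + 1 by ring, alt, alt, ih, pow_succ', mul_assoc]

lemma ab_pow_mul (a b : A) (h : ℕ) : (a * b) ^ h * a = a * (b * a) ^ h := by
  induction h with
  | zero => simp
  | succ h ih => rw [pow_succ', mul_assoc, ih, pow_succ']; simp only [mul_assoc]

lemma alt_odd (a b : A) (h : ℕ) : alt a b (2 * h + 1) = (a * b) ^ h * a := by
  rw [alt, alt_even, ab_pow_mul]

lemma sq_comm (hab : a ^ 2 = b ^ 2) : Commute (a ^ 2) (a * b) :=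
  ((Commute.refl a).pow_left 2).mul_right (hab ▸ (Commute.refl b).pow_left 2)

lemma pow_even_comm (hab : a ^ 2 = b ^ 2) (m j : ℕ) :
    Commute (a ^ (2 * m)) ((a * b) ^ j) := by
  rw [pow_mul]; exact (sq_comm hab).pow_pow m j

lemma ab_ba (hab : a ^ 2 = b ^ 2) (h : ℕ) : (a * b) ^ h * (b * a) ^ h = a ^ (4 * h) := by
  induction h with
  | zero => simp
  | succ h ih =>
    have h1 : a * b * (b * a) = a ^ 4 := by
      rw [show a * b * (b * a) = a * b ^ 2 * a by simp only [pow_two, mul_assoc], ← hab]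
      simp only [pow_succ, pow_zero, one_mul, mul_assoc]
    have hc : Commute (a ^ 4) ((a * b) ^ h) := pow_even_comm hab 2 h
    calc (a * b) ^ (h + 1) * (b * a) ^ (h + 1)
        = (a * b) ^ h * (a * b * (b * a)) * (b * a) ^ h := by
          rw [pow_succ, pow_succ']; simp only [mul_assoc]
      _ = a ^ 4 * ((a * b) ^ h * (b * a) ^ h) := by rw [h1, ← hc.eq, mul_assoc]
      _ = a ^ (4 * (h + 1)) := by rw [ih, ← pow_add]; congr 1; ring

lemma pow_even_eq (hab : a ^ 2 = b ^ 2) (m : ℕ) : b ^ (2 * m) = a ^ (2 * m) := by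
  rw [pow_mul, pow_mul, hab]

lemma pow_even_comm_swap (hab : a ^ 2 = b ^ 2) (m j : ℕ) :
    Commute (a ^ (2 * m)) ((b * a) ^ j) := by
  rw [← pow_even_eq hab]; exact pow_even_comm hab.symm m j

lemma ba_ab (hab : a ^ 2 = b ^ 2) (h : ℕ) : (b * a) ^ h * (a * b) ^ h = a ^ (4 * h) := by
  rw [ab_ba hab.symm, show 4 * h = 2 * (2 * h) by ring, pow_even_eq hab]

variable {k : Type*} [Field k] [Algebra k A]

/-! ### Normal forms in one block -/

/-- In each block the alternating words of length `2n` collapse to a scalar times a power of `a`. -/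
lemma ab_pow_n (hab : a ^ 2 = b ^ 2) {n : ℕ} {c : k} (hc : c * c = 1)
    (hn : alt b a n = c • alt a b n) : (a * b) ^ n = c • a ^ (2 * n) := by
  have hn' : alt a b n = c • alt b a n := by rw [hn, smul_smul, hc, one_smul]
  obtain ⟨h, rfl | rfl⟩ := Nat.even_or_odd' n
  · rw [alt_even, alt_even] at hn'
    calc (a * b) ^ (2 * h) = (a * b) ^ h * (a * b) ^ h := by rw [two_mul, pow_add]
      _ = (a * b) ^ h * (c • (b * a) ^ h) := by rw [← hn']
      _ = c • a ^ (2 * (2 * h)) := by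
        rw [mul_smul_comm, ab_ba hab]; congr 2; ring
  · rw [alt_odd, alt_odd] at hn
    calc (a * b) ^ (2 * h + 1) = (a * b) ^ h * a * (b * (a * b) ^ h) := by
          rw [show 2 * h + 1 = h + (1 + h) by ring, pow_add, pow_add, pow_one]
          simp only [mul_assoc]
      _ = (a * b) ^ h * a * (c • ((a * b) ^ h * a)) := by rw [← ab_pow_mul, hn]
      _ = c • ((a * b) ^ h * (b * a) ^ h * a ^ 2) := by
          have hcomm := (pow_even_comm_swap hab 1 h).eq
          rw [mul_one] at hcomm
          rw [mul_smul_comm, mul_assoc _ ((b * a) ^ h), ← hcomm]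
          nth_rewrite 2 [ab_pow_mul]
          rw [pow_two]
          simp only [mul_assoc]
      _ = c • a ^ (2 * (2 * h + 1)) := by
          rw [ab_ba hab, ← pow_add]; congr 2; ring

/-- Since `a^{2N}` acts as the sign `ν` on the block, exponents of `a` have period `4N`. -/
lemma pow_period {N : ℕ} {ν : k} (hν : ν * ν = 1) (ha : a ^ (2 * N + 1) = ν • a)
    {m : ℕ} (hm : 1 ≤ m) (L : ℕ) : a ^ (m + 4 * N * L) = a ^ m := by
  have step : ∀ j, a ^ (j + 1 + 2 * N) = ν • a ^ (j + 1) := fun j => by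
    rw [show j + 1 + 2 * N = j + (2 * N + 1) by ring, pow_add, ha, mul_smul_comm, pow_succ]
  obtain ⟨m, rfl⟩ := Nat.exists_eq_add_of_le' hm
  induction L with
  | zero => simp
  | succ L ih =>
    rw [show m + 1 + 4 * N * (L + 1) = (m + 4 * N * L + 2 * N) + 1 + 2 * N by ring, step,
      show m + 4 * N * L + 2 * N + 1 = m + 4 * N * L + 1 + 2 * N by ring, step, smul_smul, hν,
      one_smul, show m + 4 * N * L + 1 = m + 1 + 4 * N * L by ring, ih]

/-- Each positive power of `a` is, up to sign, one of the powers occurring in the basis. -/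
lemma pow_reduce {N : ℕ} (hN : 1 ≤ N) {ν : k} (hν : ν * ν = 1) (ha : a ^ (2 * N + 1) = ν • a)
    (m : ℕ) : ∃ (i : Fin (2 * N)) (ε : k), ε ≠ 0 ∧ a ^ (m + 1) = ε • a ^ ((i : ℕ) + 1) := by
  induction m using Nat.strong_induction_on with
  | _ m ih =>
    rcases lt_or_ge m (2 * N) with hm | hm
    · exact ⟨⟨m, hm⟩, 1, one_ne_zero, by simp⟩
    · obtain ⟨j, rfl⟩ := Nat.exists_eq_add_of_le' hm
      obtain ⟨i, ε, hε, h⟩ := ih j (by omega)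
      have hν0 : ν ≠ 0 := fun h0 => by simp [h0] at hν
      refine ⟨i, ν * ε, mul_ne_zero hν0 hε, ?_⟩
      rw [show j + 2 * N + 1 = j + (2 * N + 1) by ring, pow_add, ha, mul_smul_comm, ← pow_succ,
        h, smul_smul]

/-- Rewriting `(ab)^t` through `(ba)^{n-t}`. This is needed when `n < 2t`, where the word
`(ab)^t` is too long for the basis. The summand `2 N n` in the exponent uses the periodicity of the
powers of `a` to keep the subtraction in `ℕ` from truncating. -/
lemma long_word (hab : a ^ 2 = b ^ 2) {n N : ℕ} {c ν : k} (hN : 1 ≤ N) (hν : ν * ν = 1)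
    (ha : a ^ (2 * N + 1) = ν • a) (hw : (a * b) ^ n = c • a ^ (2 * n))
    {t m : ℕ} (hm : 1 ≤ m) (ht : t ≤ n) :
    a ^ (2 * m) * (a * b) ^ t
      = c • (a ^ (2 * (m + 2 * N * n - 2 * (n - t) + n)) * (b * a) ^ (n - t)) := by
  have hNn : n ≤ N * n := Nat.le_mul_of_pos_left n hN
  set E := m + 2 * N * n - 2 * (n - t) with hE
  have hE' : 2 * m + 4 * N * n = 2 * E + 4 * (n - t) := by
    have : 2 * N * n = 2 * (N * n) := by ring
    have h4 : 4 * N * n = 4 * (N * n) := by ring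
    omega
  calc a ^ (2 * m) * (a * b) ^ t = a ^ (2 * E + 4 * (n - t)) * (a * b) ^ t := by
        rw [← hE', pow_period hν ha (by omega)]
    _ = a ^ (2 * E) * ((a * b) ^ t * ((a * b) ^ (n - t) * (b * a) ^ (n - t))) := by
        rw [ab_ba hab, pow_add, mul_assoc, show 4 * (n - t) = 2 * (2 * (n - t)) by ring,
          (pow_even_comm hab _ t).eq]
    _ = a ^ (2 * E) * ((a * b) ^ n * (b * a) ^ (n - t)) := by
        rw [← mul_assoc ((a * b) ^ t), ← pow_add, Nat.add_sub_cancel' ht]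
    _ = _ := by
        rw [hw, smul_mul_assoc, mul_smul_comm, ← mul_assoc, ← pow_add, mul_add]

/-- Three basis-like elements `a^m χ_b^j` with pairwise distinct word lengths `j` are independent. -/
lemma three_indep {N n : ℕ} (hN : 1 ≤ N) {ν : k} (hν : ν * ν = 1)
    (ha : a ^ (2 * N + 1) = ν • a)
    (hli : LinearIndependent k
      (fun p : Fin (2 * N) × Fin n => a ^ ((p.1 : ℕ) + 1) * alt b a (p.2 : ℕ)))
    {m₁ m₂ m₃ j₁ j₂ j₃ : ℕ} (h₁ : j₁ < n) (h₂ : j₂ < n) (h₃ : j₃ < n)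
    (h12 : j₁ ≠ j₂) (h13 : j₁ ≠ j₃) (h23 : j₂ ≠ j₃) {r₁ r₂ r₃ : k}
    (h : r₁ • (a ^ (m₁ + 1) * alt b a j₁) + r₂ • (a ^ (m₂ + 1) * alt b a j₂)
      + r₃ • (a ^ (m₃ + 1) * alt b a j₃) = 0) : r₁ = 0 ∧ r₂ = 0 ∧ r₃ = 0 := by
  obtain ⟨i₁, ε₁, hε₁, e₁⟩ := pow_reduce hN hν ha m₁
  obtain ⟨i₂, ε₂, hε₂, e₂⟩ := pow_reduce hN hν ha m₂
  obtain ⟨i₃, ε₃, hε₃, e₃⟩ := pow_reduce hN hν ha m₃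
  rw [e₁, e₂, e₃] at h
  simp only [smul_mul_assoc, smul_smul] at h
  have hinj : Function.Injective
      (![(i₁, ⟨j₁, h₁⟩), (i₂, ⟨j₂, h₂⟩), (i₃, ⟨j₃, h₃⟩)] : Fin 3 → Fin (2 * N) × Fin n) := by
    intro p q hpq
    fin_cases p <;> fin_cases q <;> simp_all
  have h3 := Fintype.linearIndependent_iff.1 (hli.comp _ hinj) ![r₁ * ε₁, r₂ * ε₂, r₃ * ε₃]
    (by simpa [Fin.sum_univ_three] using h)
  have q₁ := h3 0
  have q₂ := h3 1
  have q₃ := h3 2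
  simp [hε₁, hε₂, hε₃] at q₁ q₂ q₃
  exact ⟨q₁, q₂, q₃⟩

/-! ### The criterion in one block -/

/-- The criterion for the vanishing of a product inside one block. -/
lemma block (hab : a ^ 2 = b ^ 2) {N n : ℕ} (hN : 1 ≤ N) {ν c : k} (hν : ν * ν = 1)
    (hc : c * c = 1) (ha : a ^ (2 * N + 1) = ν • a) (hb : b ^ (2 * N + 1) = ν • b)
    (hn : alt b a n = c • alt a b n)
    (hli : LinearIndependent k
      (fun p : Fin (2 * N) × Fin n => a ^ ((p.1 : ℕ) + 1) * alt b a (p.2 : ℕ)))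
    {s h : ℕ} (hs : 1 ≤ s) (hh : 1 ≤ h) (ht : 2 * h < n) (α₁ α₂ δ₁ δ₂ : k) :
    (α₁ • (a ^ (2 * s) * (a * b) ^ h) + α₂ • (a ^ (2 * s) * (b * a) ^ h))
      * (δ₁ • (a ^ (2 * s) * (a * b) ^ h) + δ₂ • (a ^ (2 * s) * (b * a) ^ h)) = 0
    ↔ α₁ * δ₂ + α₂ * δ₁ = 0 ∧ (2 * (2 * h) ≠ n → α₁ * δ₁ = 0 ∧ α₂ * δ₂ = 0)
      ∧ (2 * (2 * h) = n → α₁ * δ₁ + c * (α₂ * δ₂) = 0) := by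
  have hc0 : c ≠ 0 := fun h0 => by simp [h0] at hc
  have c1 := pow_even_comm hab s h
  have c2 := pow_even_comm_swap hab s h
  have collect : ∀ {p q : A}, Commute (a ^ (2 * s)) p →
      a ^ (2 * s) * p * (a ^ (2 * s) * q) = a ^ (2 * (2 * s)) * (p * q) := fun {p q} hp => by
    rw [mul_assoc, ← mul_assoc p, ← hp.eq, show 2 * (2 * s) = 2 * s + 2 * s by ring, pow_add]
    simp only [mul_assoc]
  have expand : (α₁ • (a ^ (2 * s) * (a * b) ^ h) + α₂ • (a ^ (2 * s) * (b * a) ^ h))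
      * (δ₁ • (a ^ (2 * s) * (a * b) ^ h) + δ₂ • (a ^ (2 * s) * (b * a) ^ h))
      = (α₁ * δ₁) • (a ^ (2 * (2 * s)) * (a * b) ^ (2 * h))
        + (α₂ * δ₂) • (a ^ (2 * (2 * s)) * (b * a) ^ (2 * h))
        + (α₁ * δ₂ + α₂ * δ₁) • (a ^ (4 * s + 4 * h - 1 + 1) * alt b a 0) := by
    rw [show 4 * s + 4 * h - 1 + 1 = 2 * (2 * s) + 4 * h by omega, alt, mul_one, pow_add]
    simp only [add_mul, mul_add, smul_mul_smul_comm, collect c1, collect c2, ab_ba hab,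
      ba_ab hab, ← pow_add, ← two_mul, add_smul]
    abel
  -- An even word starting with `a` is absorbed into the power of `a` and a shorter word.
  have shift : ∀ m j, a ^ (2 * m) * (a * b) ^ (j + 1) = a ^ (2 * m + 1) * alt b a (2 * j + 1) := by
    intro m j
    rw [← alt_even, show 2 * (j + 1) = 2 * j + 1 + 1 by ring, alt, pow_succ, mul_assoc]
  have keep : ∀ m j, 1 ≤ m →
      a ^ (2 * m) * (b * a) ^ j = a ^ (2 * m - 1 + 1) * alt b a (2 * j) := by
    intro m j hm
    rw [← alt_even, show 2 * m - 1 + 1 = 2 * m by omega]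
  rw [expand]
  rcases lt_trichotomy (2 * (2 * h)) n with hlt | heq | hgt
  · refine ⟨fun H => ?_, ?_⟩
    · rw [show 2 * h = 2 * h - 1 + 1 by omega, shift, keep _ _ (by omega)] at H
      obtain ⟨r1, r2, r3⟩ := three_indep hN hν ha hli (by omega) (by omega) (by omega)
        (by omega) (by omega) (by omega) H
      exact ⟨r3, fun _ => ⟨r1, r2⟩, fun h' => by simp [r1, r2]⟩
    · rintro ⟨r3, r, -⟩
      obtain ⟨r1, r2⟩ := r (by omega)
      simp [r1, r2, r3]
  · have hw : (b * a) ^ (2 * h) = c • (a * b) ^ (2 * h) := by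
      rw [← alt_even, ← alt_even, heq, hn]
    rw [hw, mul_smul_comm, smul_smul, ← add_smul]
    refine ⟨fun H => ?_, ?_⟩
    · rw [show 2 * h = 2 * h - 1 + 1 by omega, shift] at H
      -- The missing third term is supplied with coefficient `0`, at word length `1`.
      have H' : (α₁ * δ₁ + α₂ * δ₂ * c)
            • (a ^ (2 * (2 * s) + 1) * alt b a (2 * (2 * h - 1) + 1))
          + (0 : k) • (a ^ (0 + 1) * alt b a 1)
          + (α₁ * δ₂ + α₂ * δ₁) • (a ^ (4 * s + 4 * h - 1 + 1) * alt b a 0) = 0 := by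
        rw [zero_smul, add_zero]; exact H
      obtain ⟨r1, -, r3⟩ := three_indep hN hν ha hli (by omega) (by omega) (by omega)
        (by omega) (by omega) (by omega) H'
      exact ⟨r3, fun h' => absurd heq h', fun _ => by rw [← r1]; ring⟩
    · rintro ⟨r3, -, r⟩
      have := r heq
      rw [r3, show α₁ * δ₁ + α₂ * δ₂ * c = 0 by rw [← this]; ring]
      simp
  · have hw := ab_pow_n hab hc hn
    have hw' : (b * a) ^ n = c • b ^ (2 * n) :=
      ab_pow_n hab.symm hc (by rw [hn, smul_smul, hc, one_smul])
    refine ⟨fun H => ?_, ?_⟩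
    · have L1 := long_word hab hN hν ha hw (t := 2 * h) (m := 2 * s) (by omega) (by omega)
      have L2 := long_word hab.symm hN hν hb hw' (t := 2 * h) (m := 2 * s) (by omega) (by omega)
      rw [pow_even_eq hab, pow_even_eq hab] at L2
      rw [L1, L2, keep _ _ (by omega), show n - 2 * h = n - 2 * h - 1 + 1 by omega, shift,
        smul_smul, smul_smul] at H
      obtain ⟨r1, r2, r3⟩ := three_indep hN hν ha hli (by omega) (by omega) (by omega)
        (by omega) (by omega) (by omega) H
      have r1' := (mul_eq_zero.1 r1).resolve_right hc0
      have r2' := (mul_eq_zero.1 r2).resolve_right hc0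
      exact ⟨r3, fun _ => ⟨r1', r2'⟩, fun h' => by simp [r1', r2']⟩
    · rintro ⟨r3, r, -⟩
      obtain ⟨r1, r2⟩ := r (by omega)
      simp [r1, r2, r3]

lemma pow_mul_zero {p q r : A} (hq : q * r = 0) {h : ℕ} (hh : 1 ≤ h) : (p * q) ^ h * r = 0 := by
  obtain ⟨h, rfl⟩ := Nat.exists_eq_add_of_le' hh
  rw [pow_succ, mul_assoc, mul_assoc p, hq]
  simp

end Words

/-! ### Combining the two blocks -/

/-- One of the four equivalences: the product splits into its components in the two blocks, and
`block` applies to each of them. -/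
lemma suzuki_mul_eq_zero {k A : Type*} [Field k] [CharZero k] [IsAlgClosed k]
    [Ring A] [HopfAlgebra k A] (S : Suzuki k A) {s t : ℕ} (hs : 1 ≤ s) (ht1 : 1 ≤ t)
    (ht2 : t ≤ S.n - 1) (hteven : Even t) {P Q R T : A}
    (hP : P = S.x 0 0 ^ (2 * s) * chi S.x 0 0 t)
    (hQ : Q = S.x 0 0 ^ (2 * s) * chi S.x 1 1 t)
    (hR : R = S.x 0 1 ^ (2 * s) * chi S.x 0 1 t)
    (hT : T = S.x 0 1 ^ (2 * s) * chi S.x 1 0 t) (α a2 a3 δ d2 d3 : k) {y u : A}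
    (hy : y = α • P + (1 - α) • Q + a2 • R + a3 • T)
    (hu : u = δ • P - δ • Q + d2 • R + d3 • T) :
    y * u = 0
      ↔ (1 - 2 * α) * δ = 0 ∧ a2 * d3 + a3 * d2 = 0 ∧
        (2 * t ≠ S.n → δ = 0 ∧ a2 * d2 = 0 ∧ a3 * d3 = 0) ∧
        (2 * t = S.n → a2 * d2 + S.lam * (a3 * d3) = 0) := by
  obtain ⟨h, rfl⟩ := hteven
  rw [← two_mul] at *
  have hn2 := S.hn
  have hN := S.hN
  have hh : 1 ≤ h := by omega
  have hμ : S.μ * S.μ = 1 := by rcases S.hμ with e | e <;> rw [e] <;> ring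
  have hl : S.lam * S.lam = 1 := by rcases S.hlam with e | e <;> rw [e] <;> ring
  have r1 := S.rel_chi1
  have r2 := S.rel_chi2
  have hind := S.basis_indep
  have rel := S.rel_mu
  have sq1 := S.rel_sq1
  have sq2 := S.rel_sq2
  simp only [chi_eq_alt, show (0 : Fin 2) + 1 = 1 by decide, show (1 : Fin 2) + 1 = 0 by decide]
    at r1 r2 hind hP hQ hR hT
  rw [alt_even] at hP hQ hR hT
  have z01 : S.x 0 0 * S.x 0 1 = 0 := S.rel_odd 0 0 0 1 (by decide)
  have z02 : S.x 0 0 * S.x 1 0 = 0 := S.rel_odd 0 0 1 0 (by decide)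
  have z31 : S.x 1 1 * S.x 0 1 = 0 := S.rel_odd 1 1 0 1 (by decide)
  have z10 : S.x 0 1 * S.x 0 0 = 0 := S.rel_odd 0 1 0 0 (by decide)
  have z13 : S.x 0 1 * S.x 1 1 = 0 := S.rel_odd 0 1 1 1 (by decide)
  have z20 : S.x 1 0 * S.x 0 0 = 0 := S.rel_odd 1 0 0 0 (by decide)
  generalize S.x 0 0 = a at *
  generalize S.x 1 1 = b at *
  generalize S.x 0 1 = c at *
  generalize S.x 1 0 = d at *
  have pz : ∀ {p q : A} {m : ℕ}, p * q = 0 → 1 ≤ m → p ^ m * q = 0 := fun {p q m} hpq hm => by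
    obtain ⟨m, rfl⟩ := Nat.exists_eq_add_of_le' hm
    rw [pow_succ, mul_assoc, hpq, mul_zero]
  have ea : a ^ (2 * S.N) * a = a := by
    have := congrArg (· * a) rel
    simpa [add_mul, pz z10 (show 1 ≤ 2 * S.N by omega)] using this
  have eb : a ^ (2 * S.N) * b = b := by
    have := congrArg (· * b) rel
    simpa [add_mul, pz z13 (show 1 ≤ 2 * S.N by omega)] using this
  have ec : c ^ (2 * S.N) * c = S.μ • c := by
    have := congrArg (fun w => S.μ • (w * c)) rel
    simpa [add_mul, pz z01 (show 1 ≤ 2 * S.N by omega), smul_smul, hμ] using this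
  have ed : c ^ (2 * S.N) * d = S.μ • d := by
    have := congrArg (fun w => S.μ • (w * d)) rel
    simpa [add_mul, pz z02 (show 1 ≤ 2 * S.N by omega), smul_smul, hμ] using this
  have iA : LinearIndependent k
      (fun p : Fin (2 * S.N) × Fin S.n => a ^ ((p.1 : ℕ) + 1) * alt b a (p.2 : ℕ)) := by
    simpa [Function.comp_def] using
      hind.comp (fun p : Fin (2 * S.N) × Fin S.n => ((0 : Fin 2), p)) (Prod.mk_right_injective _)
  have iC : LinearIndependent k
      (fun p : Fin (2 * S.N) × Fin S.n => c ^ ((p.1 : ℕ) + 1) * alt d c (p.2 : ℕ)) := by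
    simpa [Function.comp_def] using
      hind.comp (fun p : Fin (2 * S.N) × Fin S.n => ((1 : Fin 2), p)) (Prod.mk_right_injective _)
  have BA := block (ν := (1 : k)) (c := (1 : k)) sq1 hN (one_mul 1) (one_mul 1)
    (by rw [pow_succ, ea, one_smul]) (by rw [pow_succ, pow_even_eq sq1, eb, one_smul])
    (by rw [one_smul, r2]) iA hs hh (by omega) α (1 - α) δ (-δ)
  have BC := block (ν := S.μ) (c := S.lam) sq2 hN hμ hl
    (by rw [pow_succ, ec]) (by rw [pow_succ, pow_even_eq sq2, ed])
    r1 iC hs hh (by omega) a2 a3 d2 d3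
  rw [← hP, ← hQ] at BA
  rw [← hR, ← hT] at BC
  -- The two blocks annihilate each other.
  have headA : ∀ q : A, a ^ (2 * s) * q = a * (a ^ (2 * s - 1) * q) := fun q => by
    rw [← mul_assoc, ← pow_succ', show 2 * s - 1 + 1 = 2 * s by omega]
  have headC : ∀ q : A, c ^ (2 * s) * q = c * (c ^ (2 * s - 1) * q) := fun q => by
    rw [← mul_assoc, ← pow_succ', show 2 * s - 1 + 1 = 2 * s by omega]
  have Pc : P * c = 0 := by rw [hP, mul_assoc, pow_mul_zero z31 hh, mul_zero]
  have Qc : Q * c = 0 := by rw [hQ, mul_assoc, pow_mul_zero z01 hh, mul_zero]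
  have Ra : R * a = 0 := by rw [hR, mul_assoc, pow_mul_zero z20 hh, mul_zero]
  have Ta : T * a = 0 := by rw [hT, mul_assoc, pow_mul_zero z10 hh, mul_zero]
  have PR : P * R = 0 := by rw [hR, headC, ← mul_assoc, Pc, zero_mul]
  have PT : P * T = 0 := by rw [hT, headC, ← mul_assoc, Pc, zero_mul]
  have QR : Q * R = 0 := by rw [hR, headC, ← mul_assoc, Qc, zero_mul]
  have QT : Q * T = 0 := by rw [hT, headC, ← mul_assoc, Qc, zero_mul]
  have RP : R * P = 0 := by rw [hP, headA, ← mul_assoc, Ra, zero_mul]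
  have RQ : R * Q = 0 := by rw [hQ, headA, ← mul_assoc, Ra, zero_mul]
  have TP : T * P = 0 := by rw [hP, headA, ← mul_assoc, Ta, zero_mul]
  have TQ : T * Q = 0 := by rw [hQ, headA, ← mul_assoc, Ta, zero_mul]
  have eP : a ^ (2 * S.N) * P = P := by rw [hP, headA, ← mul_assoc, ea]
  have eQ : a ^ (2 * S.N) * Q = Q := by rw [hQ, headA, ← mul_assoc, ea]
  have eR : a ^ (2 * S.N) * R = 0 := by
    rw [hR, headC, ← mul_assoc, pz z01 (by omega), zero_mul]
  have eT : a ^ (2 * S.N) * T = 0 := by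
    rw [hT, headC, ← mul_assoc, pz z01 (by omega), zero_mul]
  have split : y * u = (α • P + (1 - α) • Q) * (δ • P + (-δ) • Q)
      + (a2 • R + a3 • T) * (d2 • R + d3 • T) := by
    rw [hy, hu]
    simp only [sub_eq_add_neg, ← neg_smul, add_mul, mul_add, smul_mul_smul_comm, PR, PT, QR, QT,
      RP, RQ, TP, TQ, smul_zero, add_zero, zero_add]
    abel
  have iff1 : y * u = 0 ↔ (α • P + (1 - α) • Q) * (δ • P + (-δ) • Q) = 0
      ∧ (a2 • R + a3 • T) * (d2 • R + d3 • T) = 0 := by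
    rw [split]
    refine ⟨fun H => ?_, fun H => by rw [H.1, H.2, add_zero]⟩
    have H1 : (α • P + (1 - α) • Q) * (δ • P + (-δ) • Q) = 0 := by
      have := congrArg (a ^ (2 * S.N) * ·) H
      simpa only [mul_add (a ^ (2 * S.N)), ← mul_assoc, mul_smul_comm, eP, eQ, eR,
        eT, smul_zero, add_zero, zero_mul, mul_zero] using this
    exact ⟨H1, by rwa [H1, zero_add] at H⟩
  rw [iff1, BA, BC]
  constructor
  · rintro ⟨⟨p1, p2, -⟩, q1, q2, q3⟩
    refine ⟨by rw [← p1]; ring, q1, fun hne => ⟨?_, q2 hne⟩, q3⟩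
    obtain ⟨m1, m2⟩ := p2 hne
    linear_combination m1 - m2
  · rintro ⟨p1, q1, q2, q3⟩
    refine ⟨⟨by rw [← p1]; ring, fun hne => ?_, fun _ => ?_⟩, q1, fun hne => (q2 hne).2, q3⟩
    · simp [(q2 hne).1]
    · linear_combination -p1

/-- t even: criteria for `y·u = 0`, `z·u = 0`, `y·v = 0`, `z·v = 0`. -/
theorem stmt9 (k A : Type*) [Field k] [CharZero k] [IsAlgClosed k]
    [Ring A] [HopfAlgebra k A] (S : Suzuki k A)
    (s t : ℕ) (hs1 : 1 ≤ s) (hs2 : s ≤ S.N) (ht1 : 1 ≤ t) (ht2 : t ≤ S.n - 1)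
    (hteven : Even t)
    (P Q R T : A)
    (hP : P = S.x 0 0 ^ (2 * s) * chi S.x 0 0 t)
    (hQ : Q = S.x 0 0 ^ (2 * s) * chi S.x 1 1 t)
    (hR : R = S.x 0 1 ^ (2 * s) * chi S.x 0 1 t)
    (hT : T = S.x 0 1 ^ (2 * s) * chi S.x 1 0 t)
    (a1 a2 a3 b1 b2 b3 d1 d2 d3 e1 e2 e3 : k)
    (y z u v : A)
    (hy : y = a1 • P + (1 - a1) • Q + a2 • R + a3 • T)
    (hz : z = b1 • P + (1 - b1) • Q + b2 • R + b3 • T)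
    (hu : u = d1 • P - d1 • Q + d2 • R + d3 • T)
    (hv : v = e1 • P - e1 • Q + e2 • R + e3 • T) :
    (y * u = 0
      ↔ (1 - 2 * a1) * d1 = 0 ∧ a2 * d3 + a3 * d2 = 0 ∧
        (2 * t ≠ S.n → d1 = 0 ∧ a2 * d2 = 0 ∧ a3 * d3 = 0) ∧
        (2 * t = S.n → a2 * d2 + S.lam * (a3 * d3) = 0))
    ∧ (z * u = 0
      ↔ (1 - 2 * b1) * d1 = 0 ∧ b2 * d3 + b3 * d2 = 0 ∧
        (2 * t ≠ S.n → d1 = 0 ∧ b2 * d2 = 0 ∧ b3 * d3 = 0) ∧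
        (2 * t = S.n → b2 * d2 + S.lam * (b3 * d3) = 0))
    ∧ (y * v = 0
      ↔ (1 - 2 * a1) * e1 = 0 ∧ a2 * e3 + a3 * e2 = 0 ∧
        (2 * t ≠ S.n → e1 = 0 ∧ a2 * e2 = 0 ∧ a3 * e3 = 0) ∧
        (2 * t = S.n → a2 * e2 + S.lam * (a3 * e3) = 0))
    ∧ (z * v = 0
      ↔ (1 - 2 * b1) * e1 = 0 ∧ b2 * e3 + b3 * e2 = 0 ∧
        (2 * t ≠ S.n → e1 = 0 ∧ b2 * e2 = 0 ∧ b3 * e3 = 0) ∧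
        (2 * t = S.n → b2 * e2 + S.lam * (b3 * e3) = 0)) := by
  exact ⟨suzuki_mul_eq_zero S hs1 ht1 ht2 hteven hP hQ hR hT a1 a2 a3 d1 d2 d3 hy hu,
    suzuki_mul_eq_zero S hs1 ht1 ht2 hteven hP hQ hR hT b1 b2 b3 d1 d2 d3 hz hu,
    suzuki_mul_eq_zero S hs1 ht1 ht2 hteven hP hQ hR hT a1 a2 a3 e1 e2 e3 hy hv,
    suzuki_mul_eq_zero S hs1 ht1 ht2 hteven hP hQ hR hT b1 b2 b3 e1 e2 e3 hz hv⟩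
end
end

section
/- Assume n = 2, λ = 1, μ = 1, and let 1 ≤ s ≤ N with gcd(2s + 1, N) = 1, and θ1, θ2 ∈ {1, −1}. Then there exists a Hopf algebra automorphism Γ of A = A_{N2}^{++} with Γ(x11) = (1/2)·[x11^{2s}(x11 + x22) + θ2·x12^{2s}(x12 + x21)], Γ(x22) = (1/2)·[x11^{2s}(x11 + x22) − θ2·x12^{2s}(x12 + x21)], Γ(x12) = (θ1/2)·[x11^{2s}(x11 − x22) − θ2·x12^{2s}(x12 − x21)], and Γ(x21) = (θ1/2)·[x11^{2s}(x11 − x22) + θ2·x12^{2s}(x12 − x21)]. -/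
/-!
For `n = 2` and `λ = 1` the algebra `A` is commutative: with `a, b, c, d = x₁₁, x₂₂, x₁₂, x₂₁` its
relations are `a² = b²`, `c² = d²`, `{a, b}·{c, d} = 0` and `a^{2N} + c^{2N} = 1` (`SuzRel`).

*Existence of the algebra map.* The relations force `a^{2N} a = a` and its analogues, so monomials
are periodic of period `2N`, and the map defined linearly on the given basis by monomials in any
other solution of the relations is multiplicative (`exists_lift`). The prescribed images are a
solution (`images_rel`), because `a^{2s}(a ± b)` and `c^{2s}(c ± d)` are pairwise orthogonal and
`(a ± b)² = 2a(a ± b)`.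

*Bijectivity.* Combining images of generators, the range contains `a^{2s}(a ± b)` and
`c^{2s}(c ± d)`. Since `2s + 1` is invertible modulo `2N`, a suitable power of each is a power of
`2` times `a ± b`, resp. `c ± d` (`recover`), so the map is onto; `A` is finite dimensional.

*Compatibility with the coalgebra structure.* Both sides are algebra maps, so it is enough to
compare them on generators, using
`Δ(a^{2s}) = a^{2s} ⊗ a^{2s} + c^{2s} ⊗ c^{2s}` and `Δ(c^{2s}) = a^{2s} ⊗ c^{2s} + c^{2s} ⊗ a^{2s}`
(`exists_aut`).
-/

open scoped TensorProduct

noncomputable section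

/-! ### The relations and their consequences -/

/-- The relations of `A_{N2}^{++}` for `a = x₁₁`, `b = x₂₂`, `c = x₁₂`, `d = x₂₁`, in a
commutative ring (for `n = 2`, `λ = 1` the `χ`-relations say exactly that `a, b` commute and that
`c, d` commute). -/
structure SuzRel {A : Type*} [CommRing A] (N : ℕ) (a b c d : A) : Prop where
  hab : a ^ 2 = b ^ 2
  hcd : c ^ 2 = d ^ 2
  ac : a * c = 0
  ad : a * d = 0
  bc : b * c = 0
  bd : b * d = 0
  one : a ^ (2 * N) + c ^ (2 * N) = 1

namespace SuzRel

variable {A : Type*} [CommRing A] {N : ℕ} {a b c d : A}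

/-- The relations are invariant under `x₁₁ ↔ x₁₂`, `x₂₂ ↔ x₂₁`. -/
lemma swap (h : SuzRel N a b c d) : SuzRel N c d a b where
  hab := h.hcd
  hcd := h.hab
  ac := by rw [mul_comm]; exact h.ac
  ad := by rw [mul_comm]; exact h.bc
  bc := by rw [mul_comm]; exact h.ad
  bd := by rw [mul_comm]; exact h.bd
  one := by rw [add_comm]; exact h.one

lemma a_period (hN : 1 ≤ N) (h : SuzRel N a b c d) : a ^ (2 * N) * a = a := by
  obtain ⟨M, hM⟩ : ∃ M, 2 * N = M + 1 := ⟨2 * N - 1, by omega⟩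
  have h1 := h.one
  rw [hM] at h1 ⊢
  linear_combination a * h1 - c ^ M * h.ac

lemma b_period (hN : 1 ≤ N) (h : SuzRel N a b c d) : a ^ (2 * N) * b = b := by
  obtain ⟨M, hM⟩ : ∃ M, 2 * N = M + 1 := ⟨2 * N - 1, by omega⟩
  have h1 := h.one
  rw [hM] at h1 ⊢
  linear_combination b * h1 - c ^ M * h.bc

lemma pow_period (hN : 1 ≤ N) (h : SuzRel N a b c d) (i : ℕ) :
    a ^ (i + 1 + 2 * N) = a ^ (i + 1) := by
  rw [pow_add, pow_succ, mul_assoc, mul_comm a, h.a_period hN]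

lemma pow_mul_period {u : A} (hu : a ^ (2 * N) * u = u) (j : ℕ) : a ^ (2 * N * j) * u = u := by
  induction j with
  | zero => simp
  | succ j ih => rw [Nat.mul_succ, pow_add, mul_assoc, hu, ih]

end SuzRel

/-! ### Algebra maps out of `A` -/

section Lift

variable {k A : Type*} [Field k] [CommRing A] [Algebra k A] {N : ℕ} {a b c d P Q R T : A}

/-- A linear map that sends `a ^ i * b ^ t` to `P ^ i * Q ^ t` for `1 ≤ i ≤ 2N` does so for all
`i ≥ 1`, because both sides have period `2N` in `i`. -/
lemma map_all_pow (hN : 1 ≤ N) (h : SuzRel N a b c d) (h' : SuzRel N P Q R T)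
    (L : A →ₗ[k] A)
    (hL : ∀ i < 2 * N, ∀ t < 2, L (a ^ (i + 1) * b ^ t) = P ^ (i + 1) * Q ^ t) (i : ℕ) :
    ∀ t < 2, L (a ^ (i + 1) * b ^ t) = P ^ (i + 1) * Q ^ t := by
  induction i using Nat.strong_induction_on with
  | _ i ih =>
    intro t ht
    by_cases hi : i < 2 * N
    · exact hL i hi t ht
    · obtain ⟨j, rfl⟩ : ∃ j, i = j + 2 * N := ⟨i - 2 * N, by omega⟩
      rw [show j + 2 * N + 1 = j + 1 + 2 * N by ring, h.pow_period hN, h'.pow_period hN]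
      exact ih j (by omega) t ht

lemma map_mul_block (h : SuzRel N a b c d) (h' : SuzRel N P Q R T) (L : A →ₗ[k] A)
    (hL : ∀ i, ∀ t < 2, L (a ^ (i + 1) * b ^ t) = P ^ (i + 1) * Q ^ t)
    (i j t u : ℕ) (ht : t < 2) (hu : u < 2) :
    L ((a ^ (i + 1) * b ^ t) * (a ^ (j + 1) * b ^ u))
      = (P ^ (i + 1) * Q ^ t) * (P ^ (j + 1) * Q ^ u) := by
  by_cases htu : t + u < 2
  · have := hL (i + j + 1) (t + u) htu
    convert this using 1
    · congr 1; ring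
    · ring
  · have ht1 : t = 1 := by omega
    have hu1 : u = 1 := by omega
    subst ht1 hu1
    have := hL (i + j + 3) 0 (by norm_num)
    convert this using 1
    · congr 1
      linear_combination (-a ^ (i + j + 2)) * h.hab
    · linear_combination (-P ^ (i + j + 2)) * h'.hab

lemma block_mul_block_zero (h : SuzRel N a b c d) (i j t u : ℕ) :
    (a ^ (i + 1) * b ^ t) * (c ^ (j + 1) * d ^ u) = 0 := by
  linear_combination (a ^ i * b ^ t * c ^ j * d ^ u) * h.ac

/-- The universal property of `A_{N2}^{++}`, deduced from its basis: the linear map given on the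
basis by the monomials in `P, Q, R, T` is multiplicative. -/
theorem exists_lift (hN : 1 ≤ N) (h : SuzRel N a b c d) (h' : SuzRel N P Q R T)
    (hli : LinearIndependent k (fun p : Fin 2 × Fin (2 * N) × Fin 2 =>
      if p.1 = 0 then a ^ ((p.2.1 : ℕ) + 1) * b ^ (p.2.2 : ℕ)
      else c ^ ((p.2.1 : ℕ) + 1) * d ^ (p.2.2 : ℕ)))
    (hsp : Submodule.span k (Set.range fun p : Fin 2 × Fin (2 * N) × Fin 2 =>
      if p.1 = 0 then a ^ ((p.2.1 : ℕ) + 1) * b ^ (p.2.2 : ℕ)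
      else c ^ ((p.2.1 : ℕ) + 1) * d ^ (p.2.2 : ℕ)) = ⊤) :
    ∃ φ : A →ₐ[k] A, φ a = P ∧ φ b = Q ∧ φ c = R ∧ φ d = T := by
  let B := Module.Basis.mk hli hsp.ge
  let L : A →ₗ[k] A := B.constr k (fun p : Fin 2 × Fin (2 * N) × Fin 2 =>
      if p.1 = 0 then P ^ ((p.2.1 : ℕ) + 1) * Q ^ (p.2.2 : ℕ)
      else R ^ ((p.2.1 : ℕ) + 1) * T ^ (p.2.2 : ℕ))
  have hLB : ∀ p, L (B p) = if p.1 = 0 then P ^ ((p.2.1 : ℕ) + 1) * Q ^ (p.2.2 : ℕ)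
      else R ^ ((p.2.1 : ℕ) + 1) * T ^ (p.2.2 : ℕ) := fun p => B.constr_basis k _ p
  clear_value L
  have hB : ∀ p, B p = if p.1 = 0 then a ^ ((p.2.1 : ℕ) + 1) * b ^ (p.2.2 : ℕ)
      else c ^ ((p.2.1 : ℕ) + 1) * d ^ (p.2.2 : ℕ) := fun p => Module.Basis.mk_apply hli hsp.ge p
  have L1 := map_all_pow hN h h' L (fun i hi t ht => by
    simpa [hB] using hLB (0, ⟨i, hi⟩, ⟨t, ht⟩))
  have L2 := map_all_pow hN h.swap h'.swap L (fun i hi t ht => by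
    simpa [hB] using hLB (1, ⟨i, hi⟩, ⟨t, ht⟩))
  have hmul : (LinearMap.mul k A).compr₂ L = (LinearMap.mul k A).compl₁₂ L L := by
    refine B.ext fun p => B.ext fun q => ?_
    obtain ⟨p0, i, t⟩ := p
    obtain ⟨q0, j, u⟩ := q
    simp only [LinearMap.compr₂_apply, LinearMap.compl₁₂_apply, LinearMap.mul_apply', hB]
    by_cases hp : p0 = 0 <;> by_cases hq : q0 = 0 <;> simp only [hp, hq, if_true, if_false]
    · rw [map_mul_block h h' L L1 _ _ _ _ t.2 u.2, L1 _ _ t.2, L1 _ _ u.2]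
    · rw [block_mul_block_zero h, map_zero, L1 _ _ t.2, L2 _ _ u.2, block_mul_block_zero h']
    · rw [block_mul_block_zero h.swap, map_zero, L2 _ _ t.2, L1 _ _ u.2,
        block_mul_block_zero h'.swap]
    · rw [map_mul_block h.swap h'.swap L L2 _ _ _ _ t.2 u.2, L2 _ _ t.2, L2 _ _ u.2]
  have hmul' : ∀ x y, L (x * y) = L x * L y := fun x y => by
    simpa using LinearMap.congr_fun₂ hmul x y
  obtain ⟨M, hM⟩ : ∃ M, 2 * N = M + 1 := ⟨2 * N - 1, by omega⟩
  have hone : L 1 = 1 := by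
    have e1 := L1 M 0 (by norm_num)
    have e2 := L2 M 0 (by norm_num)
    simp only [pow_zero, mul_one] at e1 e2
    rw [← hM] at e1 e2
    rw [← h.one, map_add, e1, e2, h'.one, h.one]
  have hab' : ∀ {a b c d P Q R T : A}, SuzRel N a b c d → SuzRel N P Q R T →
      (∀ i, ∀ t < 2, L (a ^ (i + 1) * b ^ t) = P ^ (i + 1) * Q ^ t) → L a = P ∧ L b = Q := by
    intro a b c d P Q R T h h' L1
    constructor
    · simpa using L1 0 0 (by norm_num)
    -- `b = a ^ (2N) * b` exhibits `b` as a basis element.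
    · have := L1 M 1 (by norm_num)
      rwa [← hM, pow_one, pow_one, h.b_period hN, h'.b_period hN] at this
  exact ⟨AlgHom.ofLinearMap L hone hmul', (hab' h h' L1).1, (hab' h h' L1).2,
    (hab' h.swap h'.swap L2).1, (hab' h.swap h'.swap L2).2⟩

end Lift

/-! ### The images of the generators -/

section Images

variable {k A : Type*} [Field k] [CharZero k] [CommRing A] [Algebra k A] {N : ℕ} {a b c d : A}

lemma pow_succ_of_sq {a u : A} (hu : u ^ 2 = 2 * a * u) (m : ℕ) :
    u ^ (m + 1) = (2 * a) ^ m * u := by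
  induction m with
  | zero => simp
  | succ m ih => rw [pow_succ, ih]; linear_combination (2 * a) ^ m * hu

lemma add_pow_of_mul_eq_zero {u w : A} (h : u * w = 0) (m : ℕ) :
    (u + w) ^ (m + 1) = u ^ (m + 1) + w ^ (m + 1) := by
  induction m with
  | zero => simp
  | succ m ih => rw [pow_succ, ih]; linear_combination (u ^ m + w ^ m) * h

/-- `2 ^ (2N) a ^ (2N)` as the sum of the `2N`-th powers of `a ^ (2s) (a + b)` and
`a ^ (2s) (a - b)`; this uses `(a ± b)² = 2a(a ± b)`. -/
lemma sum_pow (hN : 1 ≤ N) (h : SuzRel N a b c d) (s : ℕ) :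
    (a ^ (2 * s) * (a + b)) ^ (2 * N) + (a ^ (2 * s) * (a - b)) ^ (2 * N)
      = 2 ^ (2 * N) * a ^ (2 * N) := by
  obtain ⟨M, hM⟩ : ∃ M, 2 * N = M + 1 := ⟨2 * N - 1, by omega⟩
  have hu : (a + b) ^ 2 = 2 * a * (a + b) := by linear_combination -h.hab
  have hv : (a - b) ^ 2 = 2 * a * (a - b) := by linear_combination -h.hab
  have e1 := pow_succ_of_sq hu M
  have e2 := pow_succ_of_sq hv M
  have e3 : a ^ (2 * N * (2 * s)) * a = a := SuzRel.pow_mul_period (h.a_period hN) _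
  rw [mul_pow, mul_pow, ← pow_mul, mul_comm (2 * s), hM, e1, e2, ← hM]
  rw [hM] at e3 ⊢
  linear_combination (2 ^ (M + 1) * a ^ M) * e3

/-- Let `u² = 2au` and `a ^ (2N) u = u`, as for `u = a ± b`. If `(2s+1)(m+1) ≡ 1 mod 2N`, then
`u` is, up to a power of `2`, the `(m+1)`-st power of `a ^ (2s) u`. -/
lemma recover {a u : A} (hu : u ^ 2 = 2 * a * u)
    (hu' : a ^ (2 * N) * u = u) {s m j : ℕ} (hm : (2 * s + 1) * (m + 1) = 2 * N * j + 1) :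
    (a ^ (2 * s) * u) ^ (m + 1) = 2 ^ m * u := by
  have e : 2 * s * (m + 1) + m = 2 * N * j := by linarith
  rw [mul_pow, pow_succ_of_sq hu, ← pow_mul, mul_pow]
  calc _ = 2 ^ m * (a ^ (2 * s * (m + 1) + m) * u) := by rw [pow_add]; ring
    _ = _ := by rw [e, SuzRel.pow_mul_period hu']

lemma recover_mem (hN : 1 ≤ N) (h : SuzRel N a b c d) {s m j : ℕ}
    (hm : (2 * s + 1) * (m + 1) = 2 * N * j + 1) (D : Subalgebra k A)
    (hU : a ^ (2 * s) * (a + b) ∈ D) (hV : a ^ (2 * s) * (a - b) ∈ D) : a ∈ D ∧ b ∈ D := by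
  have hu : (a + b) ^ 2 = 2 * a * (a + b) := by linear_combination -h.hab
  have hv : (a - b) ^ 2 = 2 * a * (a - b) := by linear_combination -h.hab
  have e1 := recover hu (by rw [mul_add, h.a_period hN, h.b_period hN]) hm
  have e2 := recover hv (by rw [mul_sub, h.a_period hN, h.b_period hN]) hm
  have key : ∀ u : A, 2 ^ m * u ∈ D → u ∈ D := by
    intro u hu
    have h2 : u = ((2 : k) ^ m)⁻¹ • (2 ^ m * u) := by
      have : (2 ^ m * u : A) = ((2 : k) ^ m) • u := by
        rw [Algebra.smul_def, map_pow, map_ofNat]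
      rw [this, inv_smul_smul₀ (pow_ne_zero _ two_ne_zero)]
    rw [h2]
    exact D.smul_mem hu _
  have m1 := key _ (e1 ▸ D.pow_mem hU _)
  have m2 := key _ (e2 ▸ D.pow_mem hV _)
  constructor
  · have : a = (2 : k)⁻¹ • ((a + b) + (a - b)) := by module
    rw [this]
    exact D.smul_mem (D.add_mem m1 m2) _
  · have : b = (2 : k)⁻¹ • ((a + b) - (a - b)) := by module
    rw [this]
    exact D.smul_mem (D.sub_mem m1 m2) _

/-- The prescribed images of the generators satisfy the defining relations: the four elements
`a ^ (2s) (a ± b)`, `c ^ (2s) (c ± d)` are pairwise orthogonal. -/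
theorem images_rel (hN : 1 ≤ N) (h : SuzRel N a b c d) (s : ℕ) {θ1 θ2 : k}
    (hθ1 : θ1 = 1 ∨ θ1 = -1) (hθ2 : θ2 = 1 ∨ θ2 = -1) :
    SuzRel N
      ((2 : k)⁻¹ • (a ^ (2 * s) * (a + b) + θ2 • (c ^ (2 * s) * (c + d))))
      ((2 : k)⁻¹ • (a ^ (2 * s) * (a + b) - θ2 • (c ^ (2 * s) * (c + d))))
      ((θ1 * (2 : k)⁻¹) • (a ^ (2 * s) * (a - b) - θ2 • (c ^ (2 * s) * (c - d))))
      ((θ1 * (2 : k)⁻¹) • (a ^ (2 * s) * (a - b) + θ2 • (c ^ (2 * s) * (c - d)))) := by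
  have sA := sum_pow hN h s
  have sC := sum_pow hN h.swap s
  have hone := h.one
  have UV : (a ^ (2 * s) * (a + b)) * (a ^ (2 * s) * (a - b)) = 0 := by
    linear_combination (a ^ (2 * s)) ^ 2 * h.hab
  have WX : (c ^ (2 * s) * (c + d)) * (c ^ (2 * s) * (c - d)) = 0 := by
    linear_combination (c ^ (2 * s)) ^ 2 * h.hcd
  have UW : (a ^ (2 * s) * (a + b)) * (c ^ (2 * s) * (c + d)) = 0 := by
    linear_combination (a ^ (2 * s) * c ^ (2 * s)) * (h.ac + h.ad + h.bc + h.bd)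
  have UX : (a ^ (2 * s) * (a + b)) * (c ^ (2 * s) * (c - d)) = 0 := by
    linear_combination (a ^ (2 * s) * c ^ (2 * s)) * (h.ac - h.ad + h.bc - h.bd)
  have VW : (a ^ (2 * s) * (a - b)) * (c ^ (2 * s) * (c + d)) = 0 := by
    linear_combination (a ^ (2 * s) * c ^ (2 * s)) * (h.ac + h.ad - h.bc - h.bd)
  have VX : (a ^ (2 * s) * (a - b)) * (c ^ (2 * s) * (c - d)) = 0 := by
    linear_combination (a ^ (2 * s) * c ^ (2 * s)) * (h.ac - h.ad - h.bc + h.bd)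
  generalize a ^ (2 * s) * (a + b) = U at *
  generalize a ^ (2 * s) * (a - b) = V at *
  generalize c ^ (2 * s) * (c + d) = W at *
  generalize c ^ (2 * s) * (c - d) = X at *
  simp only [Algebra.smul_def, map_mul]
  have t1 : (algebraMap k A θ1) ^ 2 = 1 := by rcases hθ1 with rfl | rfl <;> simp
  have t2 : (algebraMap k A θ2) ^ 2 = 1 := by rcases hθ2 with rfl | rfl <;> simp
  have tw : (algebraMap k A (2 : k)⁻¹) * 2 = 1 := by
    rw [← map_ofNat (algebraMap k A) 2, ← map_mul, inv_mul_cancel₀ two_ne_zero, map_one]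
  generalize algebraMap k A θ1 = p at *
  generalize algebraMap k A θ2 = q at *
  generalize algebraMap k A (2 : k)⁻¹ = z at *
  refine ⟨?_, ?_, ?_, ?_, ?_, ?_, ?_⟩
  · linear_combination (4 * z ^ 2 * q) * UW
  · linear_combination (-4 * (p * z) ^ 2 * q) * VX
  · linear_combination (p * z ^ 2) * (UV - q * UX + q * VW - q ^ 2 * WX)
  · linear_combination (p * z ^ 2) * (UV + q * UX + q * VW + q ^ 2 * WX)
  · linear_combination (p * z ^ 2) * (UV - q * UX - q * VW + q ^ 2 * WX)
  · linear_combination (p * z ^ 2) * (UV + q * UX - q * VW - q ^ 2 * WX)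
  · obtain ⟨M, hM⟩ : ∃ M, 2 * N = M + 1 := ⟨2 * N - 1, by omega⟩
    have pN : p ^ (2 * N) = 1 := by rw [pow_mul, t1, one_pow]
    have qN : q ^ (2 * N) = 1 := by rw [pow_mul, t2, one_pow]
    have qN' : (-q) ^ (2 * N) = 1 := by rw [pow_mul, neg_sq, t2, one_pow]
    have zN : z ^ (2 * N) * 2 ^ (2 * N) = 1 := by rw [← mul_pow, tw, one_pow]
    have e1 : (U + q * W) ^ (2 * N) = U ^ (2 * N) + W ^ (2 * N) := by
      rw [hM, add_pow_of_mul_eq_zero (by linear_combination q * UW), ← hM, mul_pow, qN, one_mul]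
    have e2 : (V - q * X) ^ (2 * N) = V ^ (2 * N) + X ^ (2 * N) := by
      rw [show V - q * X = V + (-q) * X by ring, hM,
        add_pow_of_mul_eq_zero (by linear_combination -q * VX), ← hM, mul_pow, qN', one_mul]
    rw [mul_pow, mul_pow (p * z), mul_pow p, pN, e1, e2]
    linear_combination z ^ (2 * N) * (sA + sC) + (a ^ (2 * N) + c ^ (2 * N)) * zN + hone

end Images

/-! ### The Hopf algebra automorphism -/

section Coalgebra

variable {k A : Type*} [Field k]

lemma mul_comm_of_adjoin [Ring A] [Algebra k A] {s : Set A} (hs : Algebra.adjoin k s = ⊤)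
    (h : ∀ x ∈ s, ∀ y ∈ s, x * y = y * x) (x y : A) : x * y = y * x := by
  have hx : x ∈ Algebra.adjoin k s := hs ▸ Algebra.mem_top
  have hy : y ∈ Algebra.adjoin k s := hs ▸ Algebra.mem_top
  have := Algebra.isMulCommutative_adjoin k h
  exact congrArg Subtype.val (mul_comm' (⟨x, hx⟩ : Algebra.adjoin k s) ⟨y, hy⟩)

lemma tensor_pow [CommRing A] [Algebra k A] {a c e f : A} (hac : a * c = 0) (m : ℕ) :
    (a ⊗ₜ[k] e + c ⊗ₜ[k] f) ^ (m + 1)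
      = (a ^ (m + 1)) ⊗ₜ[k] (e ^ (m + 1)) + (c ^ (m + 1)) ⊗ₜ[k] (f ^ (m + 1)) := by
  rw [add_pow_of_mul_eq_zero, Algebra.TensorProduct.tmul_pow, Algebra.TensorProduct.tmul_pow]
  rw [Algebra.TensorProduct.tmul_mul_tmul, hac, TensorProduct.zero_tmul]

end Coalgebra

/-- The theorem once `A` is known to be commutative, with `m`, `j` witnessing that `2s + 1` is
invertible modulo `2N`. -/
theorem exists_aut {k A : Type*} [Field k] [CharZero k] [CommRing A] [HopfAlgebra k A]
    {N : ℕ} (hN : 1 ≤ N) {a b c d : A} (h : SuzRel N a b c d)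
    (hgen : Algebra.adjoin k {a, b, c, d} = ⊤)
    (hli : LinearIndependent k (fun p : Fin 2 × Fin (2 * N) × Fin 2 =>
      if p.1 = 0 then a ^ ((p.2.1 : ℕ) + 1) * b ^ (p.2.2 : ℕ)
      else c ^ ((p.2.1 : ℕ) + 1) * d ^ (p.2.2 : ℕ)))
    (hsp : Submodule.span k (Set.range fun p : Fin 2 × Fin (2 * N) × Fin 2 =>
      if p.1 = 0 then a ^ ((p.2.1 : ℕ) + 1) * b ^ (p.2.2 : ℕ)
      else c ^ ((p.2.1 : ℕ) + 1) * d ^ (p.2.2 : ℕ)) = ⊤)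
    (Da : Coalgebra.comul (R := k) a = a ⊗ₜ[k] a + c ⊗ₜ[k] d)
    (Db : Coalgebra.comul (R := k) b = d ⊗ₜ[k] c + b ⊗ₜ[k] b)
    (Dc : Coalgebra.comul (R := k) c = a ⊗ₜ[k] c + c ⊗ₜ[k] b)
    (Dd : Coalgebra.comul (R := k) d = d ⊗ₜ[k] a + b ⊗ₜ[k] d)
    (ea : Coalgebra.counit (R := k) a = 1) (eb : Coalgebra.counit (R := k) b = 1)
    (ec : Coalgebra.counit (R := k) c = 0) (ed : Coalgebra.counit (R := k) d = 0)
    {s m j : ℕ} (hs1 : 1 ≤ s) (hm : (2 * s + 1) * (m + 1) = 2 * N * j + 1)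
    {θ1 θ2 : k} (hθ1 : θ1 = 1 ∨ θ1 = -1) (hθ2 : θ2 = 1 ∨ θ2 = -1) :
    ∃ Γ : A ≃ₗ[k] A, IsHopfAut k Γ ∧
      Γ a = (2 : k)⁻¹ • (a ^ (2 * s) * (a + b) + θ2 • (c ^ (2 * s) * (c + d))) ∧
      Γ b = (2 : k)⁻¹ • (a ^ (2 * s) * (a + b) - θ2 • (c ^ (2 * s) * (c + d))) ∧
      Γ c = (θ1 * (2 : k)⁻¹) • (a ^ (2 * s) * (a - b) - θ2 • (c ^ (2 * s) * (c - d))) ∧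
      Γ d = (θ1 * (2 : k)⁻¹) • (a ^ (2 * s) * (a - b) + θ2 • (c ^ (2 * s) * (c - d))) := by
  obtain ⟨φ, φa, φb, φc, φd⟩ := exists_lift hN h (images_rel hN h s hθ1 hθ2) hli hsp
  -- Surjectivity: the range is a subalgebra, and it contains the generators.
  have hmem : ∀ x, φ x ∈ φ.range := fun x => ⟨x, rfl⟩
  have mU : a ^ (2 * s) * (a + b) ∈ φ.range := by
    have e : a ^ (2 * s) * (a + b) = φ (a + b) := by rw [map_add, φa, φb]; module
    rw [e]; exact hmem _
  have mV : a ^ (2 * s) * (a - b) ∈ φ.range := by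
    have e : a ^ (2 * s) * (a - b) = φ (θ1 • (c + d)) := by
      rw [map_smul, map_add, φc, φd]
      rcases hθ1 with rfl | rfl <;> module
    rw [e]; exact hmem _
  have mW : c ^ (2 * s) * (c + d) ∈ φ.range := by
    have e : c ^ (2 * s) * (c + d) = φ (θ2 • (a - b)) := by
      rw [map_smul, map_sub, φa, φb]
      rcases hθ2 with rfl | rfl <;> module
    rw [e]; exact hmem _
  have mX : c ^ (2 * s) * (c - d) ∈ φ.range := by
    have e : c ^ (2 * s) * (c - d) = φ ((θ1 * θ2) • (d - c)) := by
      rw [map_smul, map_sub, φc, φd]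
      rcases hθ1 with rfl | rfl <;> rcases hθ2 with rfl | rfl <;> module
    rw [e]; exact hmem _
  have mab := recover_mem hN h hm φ.range mU mV
  have mcd := recover_mem hN h.swap hm φ.range mW mX
  have hrange : φ.range = ⊤ := by
    rw [eq_top_iff, ← hgen, Algebra.adjoin_le_iff]
    rintro x (rfl | rfl | rfl | rfl)
    exacts [mab.1, mab.2, mcd.1, mcd.2]
  have hsurj : Function.Surjective φ := (AlgHom.range_eq_top φ).1 hrange
  have : Module.Finite k A := Module.Finite.of_basis (Module.Basis.mk hli hsp.ge)
  have hinj : Function.Injective φ :=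
    (LinearMap.injective_iff_surjective (f := φ.toLinearMap)).2 hsurj
  -- Comultiplication of the building blocks.
  obtain ⟨r, hr⟩ : ∃ r, s = r + 1 := ⟨s - 1, by omega⟩
  obtain ⟨Δ, hΔ⟩ : ∃ Δ : A →ₐ[k] A ⊗[k] A, ∀ x, Coalgebra.comul (R := k) x = Δ x :=
    ⟨Bialgebra.comulAlgHom k A, fun _ => rfl⟩
  rw [hΔ] at Da Db Dc Dd
  have bs : b ^ (2 * s) = a ^ (2 * s) := by rw [pow_mul, pow_mul, h.hab]
  have ds : d ^ (2 * s) = c ^ (2 * s) := by rw [pow_mul, pow_mul, h.hcd]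
  have ind : 2 * s = (2 * r + 1) + 1 := by omega
  have Das : Δ (a ^ (2 * s)) = (a ^ (2 * s)) ⊗ₜ[k] (a ^ (2 * s))
      + (c ^ (2 * s)) ⊗ₜ[k] (c ^ (2 * s)) := by
    rw [map_pow, Da, ← ds, ind, tensor_pow h.ac, ← ind, ds]
  have Dcs : Δ (c ^ (2 * s)) = (a ^ (2 * s)) ⊗ₜ[k] (c ^ (2 * s))
      + (c ^ (2 * s)) ⊗ₜ[k] (a ^ (2 * s)) := by
    rw [map_pow, Dc, ← bs, ind, tensor_pow h.ac, ← ind, bs]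
  have z1 : a ^ (2 * s) * c = 0 := by rw [ind]; linear_combination a ^ (2 * r + 1) * h.ac
  have z2 : a ^ (2 * s) * d = 0 := by rw [ind]; linear_combination a ^ (2 * r + 1) * h.ad
  have z3 : c ^ (2 * s) * a = 0 := by rw [ind]; linear_combination c ^ (2 * r + 1) * h.ac
  have z4 : c ^ (2 * s) * b = 0 := by rw [ind]; linear_combination c ^ (2 * r + 1) * h.bc
  have ea' : Coalgebra.counit (R := k) (a ^ (2 * s)) = 1 := by
    rw [Bialgebra.counit_pow, ea, one_pow]
  have ec' : Coalgebra.counit (R := k) (c ^ (2 * s)) = 0 := by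
    rw [Bialgebra.counit_pow, ec, ind, zero_pow (by omega)]
  have hcomul : Δ.comp φ = (Algebra.TensorProduct.map φ φ).comp Δ := by
    refine AlgHom.ext_of_adjoin_eq_top hgen ?_
    rintro x (rfl | rfl | rfl | rfl) <;>
    simp only [AlgHom.comp_apply, φa, φb, φc, φd, map_smul, map_add, map_sub, map_mul, Das, Dcs,
      Da, Db, Dc, Dd, Algebra.TensorProduct.map_tmul] <;>
    simp only [mul_add, add_mul, mul_sub, Algebra.TensorProduct.tmul_mul_tmul, z1, z2, z3, z4,
      TensorProduct.tmul_zero, add_zero, zero_add,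
      smul_add, smul_sub, TensorProduct.add_tmul,
      TensorProduct.tmul_add, TensorProduct.sub_tmul, TensorProduct.tmul_sub,
      ← TensorProduct.smul_tmul', TensorProduct.tmul_smul] <;>
    rcases hθ1 with rfl | rfl <;> rcases hθ2 with rfl | rfl <;> module
  have hcounit : (Bialgebra.counitAlgHom k A).comp φ = Bialgebra.counitAlgHom k A := by
    refine AlgHom.ext_of_adjoin_eq_top hgen ?_
    rintro x (rfl | rfl | rfl | rfl) <;>
    simp only [AlgHom.comp_apply, φa, φb, φc, φd, Bialgebra.counitAlgHom_apply, map_smul,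
      map_add, map_sub, Bialgebra.counit_mul, ea', ec', ea, eb, ec, ed] <;>
    norm_num
  refine ⟨LinearEquiv.ofBijective φ.toLinearMap ⟨hinj, hsurj⟩, ⟨?_, ?_, ?_, ?_⟩,
    φa, φb, φc, φd⟩
  · exact fun x y => map_mul φ x y
  · exact map_one φ
  · intro x
    rw [hΔ, hΔ]
    exact DFunLike.congr_fun hcomul x
  · exact fun x => DFunLike.congr_fun hcounit x

/-- for `n = 2`, `λ = μ = 1`, `gcd(2s+1, N) = 1` and `θ₁, θ₂ = ±1`, the
Hopf algebra automorphism `Γ_{θ₁,θ₂,s}` exists. -/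
theorem stmt14 (k A : Type*) [Field k] [CharZero k] [IsAlgClosed k]
    [Ring A] [HopfAlgebra k A] (S : Suzuki k A)
    (hn : S.n = 2) (hlam : S.lam = 1) (hμ : S.μ = 1)
    (s : ℕ) (hs1 : 1 ≤ s) (hs2 : s ≤ S.N) (hgcd : Nat.gcd (2 * s + 1) S.N = 1)
    (θ1 θ2 : k) (hθ1 : θ1 = 1 ∨ θ1 = -1) (hθ2 : θ2 = 1 ∨ θ2 = -1) :
    ∃ Γ : A ≃ₗ[k] A, IsHopfAut k Γ ∧
      Γ (S.x 0 0) = (2 : k)⁻¹ •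
        (S.x 0 0 ^ (2 * s) * (S.x 0 0 + S.x 1 1)
          + θ2 • (S.x 0 1 ^ (2 * s) * (S.x 0 1 + S.x 1 0))) ∧
      Γ (S.x 1 1) = (2 : k)⁻¹ •
        (S.x 0 0 ^ (2 * s) * (S.x 0 0 + S.x 1 1)
          - θ2 • (S.x 0 1 ^ (2 * s) * (S.x 0 1 + S.x 1 0))) ∧
      Γ (S.x 0 1) = (θ1 * (2 : k)⁻¹) •
        (S.x 0 0 ^ (2 * s) * (S.x 0 0 - S.x 1 1)
          - θ2 • (S.x 0 1 ^ (2 * s) * (S.x 0 1 - S.x 1 0))) ∧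
      Γ (S.x 1 0) = (θ1 * (2 : k)⁻¹) •
        (S.x 0 0 ^ (2 * s) * (S.x 0 0 - S.x 1 1)
          + θ2 • (S.x 0 1 ^ (2 * s) * (S.x 0 1 - S.x 1 0))) := by
  revert hn hlam hμ hs2 hgcd
  obtain ⟨N, n, hN, hn2, μ, lam, -, -, x, gen, sq1, sq2, chi1, chi2, rmu, rodd, hcomul, hcounit,
    -, hli, hsp⟩ := S
  intro hn hlam hμ hs2 hgcd
  dsimp only at hn hlam hμ hs2 hgcd ⊢
  subst hn hlam hμ
  have c0 : ∀ i j, chi x i j 0 = 1 := fun _ _ => rfl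
  have c1 : ∀ i j, chi x i j 1 = x i j := fun i j => mul_one _
  have c2 : ∀ i j, chi x i j 2 = x i j * x (i + 1) (j + 1) := fun i j => by
    rw [← c1 (i + 1) (j + 1)]; rfl
  have cp : ∀ i j (t : Fin 2), chi x i j (t : ℕ) = x i j ^ (t : ℕ) := by
    intro i j t
    fin_cases t
    · simp [c0]
    · simp [c1]
  have hab : x 0 0 * x 1 1 = x 1 1 * x 0 0 := by simpa [c2] using chi2
  have hcd : x 0 1 * x 1 0 = x 1 0 * x 0 1 := by simpa [c2] using chi1.symm
  have hset : (Set.range fun p : Fin 2 × Fin 2 => x p.1 p.2)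
      = {x 0 0, x 1 1, x 0 1, x 1 0} := by
    ext y
    constructor
    · rintro ⟨⟨i, j⟩, rfl⟩
      fin_cases i <;> fin_cases j <;> simp
    · rintro (rfl | rfl | rfl | rfl)
      exacts [⟨(0, 0), rfl⟩, ⟨(1, 1), rfl⟩, ⟨(0, 1), rfl⟩, ⟨(1, 0), rfl⟩]
  have comm : ∀ u v : A, u * v = v * u := by
    refine mul_comm_of_adjoin gen ?_
    rw [hset]
    have o1 := rodd 0 0 0 1 (by decide)
    have o2 := rodd 0 0 1 0 (by decide)
    have o3 := rodd 1 1 0 1 (by decide)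
    have o4 := rodd 1 1 1 0 (by decide)
    have o5 := rodd 0 1 0 0 (by decide)
    have o6 := rodd 1 0 0 0 (by decide)
    have o7 := rodd 0 1 1 1 (by decide)
    have o8 := rodd 1 0 1 1 (by decide)
    rintro u (rfl | rfl | rfl | rfl) v (rfl | rfl | rfl | rfl) <;>
      simp only [o1, o2, o3, o4, o5, o6, o7, o8, hab, hcd]
  let _ : CommRing A := { ‹Ring A› with mul_comm := comm }
  have rel : SuzRel N (x 0 0) (x 1 1) (x 0 1) (x 1 0) :=
    ⟨sq1, sq2, rodd 0 0 0 1 (by decide), rodd 0 0 1 0 (by decide), rodd 1 1 0 1 (by decide),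
      rodd 1 1 1 0 (by decide), by simpa using rmu⟩
  -- `2s + 1` is odd and prime to `N`, hence invertible modulo `2N`.
  obtain ⟨m, j, hm⟩ : ∃ m j, (2 * s + 1) * (m + 1) = 2 * N * j + 1 := by
    have hcop : Nat.Coprime (2 * s + 1) (2 * N) := Nat.Coprime.mul_right (by simp) hgcd
    obtain ⟨y, -, hy⟩ := Nat.exists_mul_mod_eq_one_of_coprime hcop (by omega)
    refine ⟨y - 1, (2 * s + 1) * y / (2 * N), ?_⟩
    have hy0 : y ≠ 0 := by rintro rfl; simp at hy
    rw [Nat.sub_add_cancel (by omega)]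
    have := Nat.div_add_mod ((2 * s + 1) * y) (2 * N)
    rw [hy] at this
    exact this.symm
  have D := fun i j => hcomul i j 1 le_rfl
  simp only [c1] at D
  simp only [cp] at hli hsp
  exact exists_aut hN rel (hset ▸ gen) hli hsp (D 0 0) (D 1 1) (D 0 1) (D 1 0)
    (by simpa using hcounit 0 0) (by simpa using hcounit 1 1) (by simpa using hcounit 0 1)
    (by simpa using hcounit 1 0) hs1 hm hθ1 hθ2
end
end

section
/- Assume n = 2 and λ = 1, and let θ1, θ2 ∈ {1, −1} and 1 ≤ s ≤ N. If φ is a Hopf algebra automorphism of A = A_{N2}^{μ+} satisfying φ(x11) = (1/2)·[x11^{2s}(x11 + x22) + θ2·x12^{2s}(x12 + x21)], φ(x22) = (1/2)·[x11^{2s}(x11 + x22) − θ2·x12^{2s}(x12 + x21)], φ(x12) = (θ1/2)·[x11^{2s}(x11 − x22) − θ2·x12^{2s}(x12 − x21)], and φ(x21) = (θ1/2)·[x11^{2s}(x11 − x22) + θ2·x12^{2s}(x12 − x21)], then μ = 1 and gcd(2s + 1, N) = 1. -/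
/-!
For `n = 2` and `λ = 1` the algebra is commutative. Write `a = x₁₁`, `b = x₂₂`, `c = x₁₂`, `d = x₂₁`;
then `{a, b}` annihilates `{c, d}`, and the relation `a ^ (2N) + μ c ^ (2N) = 1` gives
`a ^ (2N) a = a` and `a ^ (2N) b = b`.

*The sign.* Since `(a ± b)² = 2a(a ± b)`, one finds `a φ(a) ^ (2N) = (a + b) / 2` and
`a φ(c) ^ (2N) = (a - b) / 2` (`mul_pow_eq`). Applying `φ` to the relation with `μ = -1` and
multiplying by `a` gives `b = a`, which contradicts the independence of `ab` and `a²`.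

*The gcd.* Let `μ = 1` and `z = a² + c²`. Then `z ^ N = 1` and `φ(z) = z ^ (2s+1)`. If
`g = gcd(2s+1, N)` and `N = gM`, then `φ(z ^ M)` is a power of `z ^ N`, hence `1`, so `z ^ M = 1` by
injectivity of `φ`. Multiplying by `a` gives `a ^ (2M+1) = a`, which forces `M = N` by independence of
the powers of `a`.
-/

open scoped TensorProduct

noncomputable section

/-- If `xy = 0`, raising `x + y` to a positive power is additive. -/
lemma add_pow_succ_of_mul_eq_zero {B : Type*} [CommRing B] {x y : B} (h : x * y = 0) (m : ℕ) :
    (x + y) ^ (m + 1) = x ^ (m + 1) + y ^ (m + 1) := by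
  induction m with
  | zero => simp
  | succ m ih =>
    rw [pow_succ, ih]
    linear_combination (x ^ m + y ^ m) * h

/-- The even powers of `(a ^ (2s) (a + b) + v) / 2`, multiplied by `a`, when `a` annihilates `v`.
Applied with `±b` for `b`, and with `v` the component of `φ(x₁₁)` or `φ(x₁₂)` coming from
`x₁₂`, `x₂₁`. -/
lemma mul_pow_eq {k B : Type*} [Field k] [CharZero k] [CommRing B] [Algebra k B]
    {a b v : B} (s : ℕ) (hab : a ^ 2 = b ^ 2) (hav : a * v = 0) (m : ℕ) :
    a * ((2 : k)⁻¹ • (a ^ (2 * s) * (a + b) + v)) ^ (2 * (m + 1))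
      = (2 : k)⁻¹ • (a ^ (2 * (2 * s + 1) * (m + 1)) * (a + b)) := by
  set h : B := algebraMap k B (2 : k)⁻¹ with hh
  have h2 : 2 * h = 1 := by
    rw [hh, ← map_ofNat (algebraMap k B) 2, ← map_mul]; simp
  simp only [Algebra.smul_def, ← hh]
  -- `(a + b)² = 2a(a + b)`
  have hP : (a + b) ^ 2 = 2 * a * (a + b) := by linear_combination -hab
  induction m with
  | zero =>
    linear_combination h ^ 2 * (2 * a ^ (2 * s) * (a + b) + v) * hav
      + h ^ 2 * a * a ^ (4 * s) * hP + h * a ^ (4 * s + 2) * (a + b) * h2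
  | succ m ih =>
    have e : ∀ w : B, a * w ^ (2 * (m + 1 + 1)) = a * w ^ (2 * (m + 1)) * w ^ 2 := by
      intro w; ring
    rw [e, ih]
    have e2 : a ^ (2 * (2 * s + 1) * (m + 1)) = a * a ^ (2 * (2 * s + 1) * m + 4 * s + 1) := by
      rw [← pow_succ']; congr 1; ring
    have e3 : a ^ (2 * (2 * s + 1) * (m + 1 + 1))
        = a * a ^ (2 * (2 * s + 1) * m + 4 * s + 1) * a ^ (4 * s + 2) := by
      rw [← pow_succ', ← pow_add]; congr 1; ring
    rw [e2, e3]
    set q := a ^ (2 * (2 * s + 1) * m + 4 * s + 1)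
    linear_combination h ^ 3 * q * (a + b) * (2 * a ^ (2 * s) * (a + b) + v) * hav
      + h ^ 3 * a * q * a ^ (4 * s) * (a + b + 2 * a) * hP
      + h * a ^ (4 * s + 3) * q * (a + b) * (2 * h + 1) * h2

/-- The theorem for a commutative algebra, using only the relations and the two consequences
`hne`, `hpow` of the linear independence of the basis. -/
lemma comm_case {k B : Type*} [Field k] [CharZero k] [CommRing B] [Algebra k B]
    {a b c d : B} {N s : ℕ} {μ θ1 θ2 : k} (hN : 1 ≤ N)
    (hμ : μ = 1 ∨ μ = -1) (hθ1 : θ1 = 1 ∨ θ1 = -1) (hθ2 : θ2 = 1 ∨ θ2 = -1)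
    (hab : a ^ 2 = b ^ 2) (hcd : c ^ 2 = d ^ 2)
    (hac : a * c = 0) (had : a * d = 0) (hbc : b * c = 0) (hbd : b * d = 0)
    (rel : a ^ (2 * N) + μ • c ^ (2 * N) = 1)
    (hne : a * b ≠ a ^ 2) (hpow : ∀ M, 1 ≤ M → M < N → a ^ (2 * M + 1) ≠ a)
    (φ : B →ₐ[k] B) (hinj : Function.Injective φ)
    (ha : φ a = (2 : k)⁻¹ • (a ^ (2 * s) * (a + b) + θ2 • (c ^ (2 * s) * (c + d))))
    (hc : φ c = (θ1 * (2 : k)⁻¹) •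
      (a ^ (2 * s) * (a - b) - θ2 • (c ^ (2 * s) * (c - d)))) :
    μ = 1 ∧ Nat.gcd (2 * s + 1) N = 1 := by
  obtain ⟨m, rfl⟩ : ∃ m, N = m + 1 := ⟨N - 1, by omega⟩
  have hc2N : ∀ w : B, w * c = 0 → a ^ (2 * (m + 1)) * w = w := by
    intro w hw
    have h0 : w * c ^ (2 * (m + 1)) = 0 := by
      rw [show 2 * (m + 1) = (2 * m + 1) + 1 by ring, pow_succ', ← mul_assoc, hw, zero_mul]
    have := congrArg (w * ·) rel
    beta_reduce at this
    rw [mul_add w, mul_smul_comm, h0, smul_zero, add_zero, mul_one] at this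
    rw [mul_comm, this]
  have hiter : ∀ (j : ℕ) (w : B), w * c = 0 → a ^ (2 * j * (m + 1)) * w = w := by
    intro j w hw
    induction j with
    | zero => simp
    | succ j ih =>
      rw [show 2 * (j + 1) * (m + 1) = 2 * j * (m + 1) + 2 * (m + 1) by ring, pow_add,
        mul_assoc, hc2N w hw, ih]
  have hφrel := congrArg φ rel
  simp only [map_add, map_smul, map_pow, map_one] at hφrel
  have hsq1 : θ1 ^ 2 = 1 := by rcases hθ1 with h | h <;> simp [h]
  have hsq2 : θ2 ^ 2 = 1 := by rcases hθ2 with h | h <;> simp [h]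
  have Ea : a * φ a ^ (2 * (m + 1)) = (2 : k)⁻¹ • (a + b) := by
    rw [ha, mul_pow_eq s hab, hiter]
    · linear_combination hac + hbc
    · rw [mul_smul_comm, show a * (c ^ (2 * s) * (c + d)) = 0 by
        linear_combination c ^ (2 * s) * (hac + had), smul_zero]
  -- squaring removes the sign `θ1`
  have hc' : ∀ j, φ c ^ (2 * j) = ((2 : k)⁻¹ •
      (a ^ (2 * s) * (a + -b) + -(θ2 • (c ^ (2 * s) * (c - d))))) ^ (2 * j) := by
    intro j
    rw [hc, mul_smul, smul_pow, pow_mul θ1, hsq1, one_pow, one_smul, sub_eq_add_neg,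
      sub_eq_add_neg a b]
  have Ec : a * φ c ^ (2 * (m + 1)) = (2 : k)⁻¹ • (a - b) := by
    rw [hc', mul_pow_eq s (by rw [hab]; ring), hiter, sub_eq_add_neg]
    · linear_combination hac - hbc
    · rw [mul_neg, mul_smul_comm, show a * (c ^ (2 * s) * (c - d)) = 0 by
        linear_combination c ^ (2 * s) * (hac - had), smul_zero, neg_zero]
  have hμ1 : μ = 1 := by
    rcases hμ with h | h
    · exact h
    · exfalso
      apply hne
      have := congrArg (a * ·) hφrel
      beta_reduce at this
      rw [mul_add a, mul_smul_comm, Ea, Ec, h, mul_one] at this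
      have hb : b = a := by
        refine Eq.trans ?_ this
        module
      rw [hb]; ring
  refine ⟨hμ1, ?_⟩
  subst hμ1
  rw [one_smul] at rel
  have hsqs : (a ^ 2) * (c ^ 2) = 0 := by linear_combination a * c * hac
  have hzN : (a ^ 2 + c ^ 2) ^ (m + 1) = 1 := by
    rw [add_pow_succ_of_mul_eq_zero hsqs, ← pow_mul, ← pow_mul, rel]
  have hφz : φ (a ^ 2 + c ^ 2) = (a ^ 2 + c ^ 2) ^ (2 * s + 1) := by
    rw [add_pow_succ_of_mul_eq_zero hsqs, map_add, map_pow, map_pow]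
    have := hc' 1
    rw [mul_one] at this
    rw [this, ha]
    set h : B := algebraMap k B (2 : k)⁻¹ with hh
    have h2 : 2 * h = 1 := by
      rw [hh, ← map_ofNat (algebraMap k B) 2, ← map_mul]; simp
    have ht : (algebraMap k B θ2) ^ 2 = 1 := by rw [← map_pow, hsq2, map_one]
    simp only [Algebra.smul_def, ← hh]
    set t : B := algebraMap k B θ2
    have q1 : (a + b) * (c + d) = 0 := by linear_combination hac + had + hbc + hbd
    have q2 : (a - b) * (c - d) = 0 := by linear_combination hac - had - hbc + hbd
    rw [← pow_mul, ← pow_mul]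
    linear_combination 2 * h ^ 2 * a ^ (2 * s) * c ^ (2 * s) * t * (q1 - q2)
      + h ^ 2 * c ^ (4 * s) * ((c + d) ^ 2 + (c - d) ^ 2) * ht
      - 2 * h ^ 2 * a ^ (4 * s) * hab - 2 * h ^ 2 * c ^ (4 * s) * hcd
      + (2 * h + 1) * (a ^ (4 * s + 2) + c ^ (4 * s + 2)) * h2
  by_contra hg
  obtain ⟨M, hM⟩ := Nat.gcd_dvd_right (2 * s + 1) (m + 1)
  obtain ⟨j, hj⟩ := Nat.gcd_dvd_left (2 * s + 1) (m + 1)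
  have hg0 : 0 < Nat.gcd (2 * s + 1) (m + 1) := Nat.gcd_pos_of_pos_right _ (by omega)
  set g := Nat.gcd (2 * s + 1) (m + 1)
  have hM0 : 1 ≤ M := by
    rcases Nat.eq_zero_or_pos M with h | h
    · simp [h] at hM
    · exact h
  have hMN : M < m + 1 := by rw [hM]; nlinarith [show 2 ≤ g by omega]
  have hzM : (a ^ 2 + c ^ 2) ^ M = 1 := by
    apply hinj
    rw [map_one, map_pow, hφz, ← pow_mul, hj, show g * j * M = (g * M) * j by ring, ← hM,
      pow_mul, hzN, one_pow]
  apply hpow M hM0 hMN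
  have haz : ∀ i : ℕ, a * (a ^ 2 + c ^ 2) ^ i = a ^ (2 * i + 1) := by
    intro i
    induction i with
    | zero => simp
    | succ i ih =>
      rw [pow_succ, ← mul_assoc, ih]
      linear_combination a ^ (2 * i) * c * hac
  rw [← haz, hzM, mul_one]

/-- For `n = 2` and `λ = 1` the generators commute pairwise, hence so does the whole algebra. -/
lemma Suzuki.mul_comm_of_two {k A : Type*} [Field k] [CharZero k] [IsAlgClosed k]
    [Ring A] [HopfAlgebra k A] (S : Suzuki k A) (hn : S.n = 2) (hlam : S.lam = 1) (u v : A) :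
    u * v = v * u := by
  have r1 := S.rel_chi1
  have r2 := S.rel_chi2
  rw [hn, hlam] at r1
  rw [hn] at r2
  simp [chi] at r1 r2
  have ho := S.rel_odd
  have hcomm : ∀ p ∈ Set.range (fun p : Fin 2 × Fin 2 => S.x p.1 p.2),
      ∀ q ∈ Set.range (fun p : Fin 2 × Fin 2 => S.x p.1 p.2), p * q = q * p := by
    rintro _ ⟨⟨i, j⟩, rfl⟩ _ ⟨⟨i', j'⟩, rfl⟩
    dsimp only
    by_cases hodd : Odd ((i : ℕ) + j + i' + j')
    · rw [ho _ _ _ _ hodd, ho]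
      convert hodd using 1
      omega
    · fin_cases i <;> fin_cases j <;> fin_cases i' <;> fin_cases j' <;>
        first
        | rfl
        | exact r1
        | exact r1.symm
        | exact r2
        | exact r2.symm
        | exact absurd (by decide) hodd
  have I := Algebra.isMulCommutative_adjoin k hcomm
  have hu : ∀ w : A, w ∈ Algebra.adjoin k (Set.range fun p : Fin 2 × Fin 2 => S.x p.1 p.2) := by
    intro w; rw [S.gen]; trivial
  exact congrArg Subtype.val (I.is_comm.comm ⟨u, hu u⟩ ⟨v, hu v⟩)

/-- if a Hopf algebra automorphism of `A_{N2}^{μ+}` has the form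
`Γ_{θ₁,θ₂,s}`, then `μ = 1` and `gcd(2s+1, N) = 1`. -/
theorem stmt15 (k A : Type*) [Field k] [CharZero k] [IsAlgClosed k]
    [Ring A] [HopfAlgebra k A] (S : Suzuki k A)
    (hn : S.n = 2) (hlam : S.lam = 1)
    (θ1 θ2 : k) (hθ1 : θ1 = 1 ∨ θ1 = -1) (hθ2 : θ2 = 1 ∨ θ2 = -1)
    (s : ℕ) (hs1 : 1 ≤ s) (hs2 : s ≤ S.N)
    (φ : A ≃ₗ[k] A) (hφ : IsHopfAut k φ)
    (h11 : φ (S.x 0 0) = (2 : k)⁻¹ •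
        (S.x 0 0 ^ (2 * s) * (S.x 0 0 + S.x 1 1)
          + θ2 • (S.x 0 1 ^ (2 * s) * (S.x 0 1 + S.x 1 0))))
    (h22 : φ (S.x 1 1) = (2 : k)⁻¹ •
        (S.x 0 0 ^ (2 * s) * (S.x 0 0 + S.x 1 1)
          - θ2 • (S.x 0 1 ^ (2 * s) * (S.x 0 1 + S.x 1 0))))
    (h12 : φ (S.x 0 1) = (θ1 * (2 : k)⁻¹) •
        (S.x 0 0 ^ (2 * s) * (S.x 0 0 - S.x 1 1)
          - θ2 • (S.x 0 1 ^ (2 * s) * (S.x 0 1 - S.x 1 0))))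
    (h21 : φ (S.x 1 0) = (θ1 * (2 : k)⁻¹) •
        (S.x 0 0 ^ (2 * s) * (S.x 0 0 - S.x 1 1)
          + θ2 • (S.x 0 1 ^ (2 * s) * (S.x 0 1 - S.x 1 0)))) :
    S.μ = 1 ∧ Nat.gcd (2 * s + 1) S.N = 1 := by
  have hmc := S.mul_comm_of_two hn hlam
  let _ : CommRing A := { (inferInstance : Ring A) with mul_comm := hmc }
  have hN := S.hN
  -- distinct indices give distinct basis vectors
  have hind := S.basis_indep.injective
  let ψ : A →ₐ[k] A := AlgHom.ofLinearMap φ.toLinearMap hφ.2.1 hφ.1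
  have ho := S.rel_odd
  refine comm_case (k := k) (B := A) (b := S.x 1 1) (d := S.x 1 0) S.hN S.hμ hθ1 hθ2
    S.rel_sq1 S.rel_sq2 (ho _ _ _ _ (by decide)) (ho _ _ _ _ (by decide))
    (ho _ _ _ _ (by decide)) (ho _ _ _ _ (by decide)) S.rel_mu ?_ ?_ ψ φ.injective h11 h12
  · intro h
    have := @hind (0, ⟨0, by omega⟩, ⟨1, by omega⟩) (0, ⟨1, by omega⟩, ⟨0, by omega⟩)
      (by simpa [chi] using h)
    simp at this
  · intro M h1 h2 h
    have := @hind (0, ⟨2 * M, by omega⟩, ⟨0, by omega⟩) (0, ⟨0, by omega⟩, ⟨0, by omega⟩)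
      (by simpa [chi] using h)
    simp at this
    omega
end
end

section
/- Assume n > 2. A bijective k-linear map φ : A → A on A = A_{Nn}^{μλ} is a Hopf algebra automorphism if and only if there exist integers s, t with 1 ≤ s ≤ N, 1 ≤ t ≤ n − 1, t odd, 2t ≠ n, gcd(2s + t, N) = 1, and a scalar ξ ∈ k with ξ^{2N} = 1 if n is even and ξ² = 1 if n is odd, such that φ is the algebra automorphism determined by either φ(x11) = x11^{2s}χ11^t, φ(x22) = x11^{2s}χ22^t, φ(x12) = ξ·x12^{2s}χ12^t, φ(x21) = ξ^{−1}·x12^{2s}χ21^t (the automorphism Ψ_ξ^{s,t}), or φ(x11) = x11^{2s}χ22^t, φ(x22) = x11^{2s}χ11^t, φ(x12) = ξ·x12^{2s}χ21^t, φ(x21) = ξ^{−1}·x12^{2s}χ12^t (the automorphism Φ_ξ^{s,t}). -/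
/-!
The matrix coefficients `c s t i j = x_{0,i+j}^{2s} χ_{ij}^t` (indices in `ℤ/2`) satisfy
`Δ (c i j) = ∑ c i l ⊗ c l j`, and the given basis splits, up to nonzero scalars, into the blocks
`C(s, t) = span {c s t i j}` with `1 ≤ s ≤ N`, `0 ≤ t ≤ n`; these have dimension four for
`0 < t < n` and dimension two for `t = 0, n`. The projection onto a block is the convolution, from
either side, with the counit of that block (`proj_left`, `proj_right`).

Let `φ` be a Hopf automorphism and `y i j = φ (x i j)`. The `y i j` are linearly independent
comatrix elements, so each block projection acts on them by one scalar (`proj_scalar`), and hence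
all of them lie in a single four-dimensional block `C(s, t)` (`exists_block`, `not_small`). The
coordinates of `y` with respect to `c s t` form a system `E` of matrix units of `M₂(k)`
(`comatrix_form`). If `t` is even or `2t = n`, then `c 0 0` and `c 1 1` commute, hence so do
`y 0 0` and `y 1 1`, whereas `x 0 0` and `x 1 1` do not. For `t` odd with `2t ≠ n`, the relations
`y 0 0 * y 0 1 = y 0 0 * y 1 0 = 0` force `E 0 0` to be diagonal (`offdiag_zero`), and then `y` is
`c s t` up to a diagonal gauge transformation with parameter `ξ` and the swap of the two indices
(`diag_units`, `standard_form`): these are the maps `Ψ` and `Φ`.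

The remaining constraints come from the relations. Since `φ (x₁₁²) = x₁₁^{2(2s+t)}` and the powers
of `x₁₁²` form a cyclic group of order `N`, injectivity gives `gcd (2s + t, N) = 1`
(`gcd_eq_one`). The relation `x₁₁^{2N} + μ x₁₂^{2N} = 1` gives `ξ^{2N} = 1` (`xi_pow`), and for
odd `n` the relation `χ₂₁ⁿ = λ χ₁₂ⁿ` gives `ξ² = 1` (`xi_sq`).

Conversely, an algebra map in standard form is compatible with `Δ` and `ε` on the generators,
hence everywhere (`comul_standard`, `counit_standard`).
-/

open scoped TensorProduct

noncomputable section

namespace Suzuki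

variable {k A : Type*} [Field k] [CharZero k] [IsAlgClosed k] [Ring A] [HopfAlgebra k A]
  (S : Suzuki k A)

/-! ### Multiplication rules -/

/-- The common square of the generators `x i j` with `i + j = a`. -/
def z (a : Fin 2) : A := S.x 0 a ^ 2

/-- The comatrix entries `x_{0,i+j}^{2s} χ_{ij}^t`. -/
def c (s t : ℕ) (i j : Fin 2) : A := S.z (i + j) ^ s * chi S.x i j t

/-- The scalar by which `z a ^ N` acts on the corner of `A` belonging to `a`. -/
def nu (a : Fin 2) : k := if a = 0 then 1 else S.μ

/-- The scalar relating the two alternating products of length `n` in the corner `a`. -/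
def kap (a : Fin 2) : k := if a = 0 then 1 else S.lam

lemma fin2_shift (i j : Fin 2) : (i + 1) + (j + 1) = i + j := by
  revert i j; decide

lemma fin2_two (i : Fin 2) : i + 1 + 1 = i := by
  revert i; decide

lemma sq_x (i j : Fin 2) : S.x i j * S.x i j = S.z (i + j) := by
  have h1 := S.rel_sq1
  have h2 := S.rel_sq2
  fin_cases i <;> fin_cases j <;> simp_all [z, pow_two]

lemma x_mul_x {i j i' j' : Fin 2} (h : i + j ≠ i' + j') : S.x i j * S.x i' j' = 0 := by
  apply S.rel_odd
  revert i j i' j'; decide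

lemma x_comm_z (i j : Fin 2) : Commute (S.x i j) (S.z (i + j)) := by
  rw [← sq_x]; exact (Commute.refl _).mul_right (Commute.refl _)

lemma x_mul_z {i j a : Fin 2} (h : i + j ≠ a) : S.x i j * S.z a = 0 := by
  have : i + j ≠ 0 + a := by simpa using h
  rw [z, pow_two, ← mul_assoc, S.x_mul_x this, zero_mul]

lemma z_mul_x {i j a : Fin 2} (h : i + j ≠ a) : S.z a * S.x i j = 0 := by
  have : 0 + a ≠ i + j := by simpa using h.symm
  rw [z, pow_two, mul_assoc, S.x_mul_x this, mul_zero]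

lemma z_mul_z {a b : Fin 2} (h : a ≠ b) : S.z a * S.z b = 0 := by
  have : 0 + a ≠ b := by simpa using h
  rw [z, pow_two, mul_assoc, S.x_mul_z this, mul_zero]

lemma z_pow_mul_z_pow {a b : Fin 2} (h : a ≠ b) {s r : ℕ} (hs : 1 ≤ s) (hr : 1 ≤ r) :
    S.z a ^ s * S.z b ^ r = 0 := by
  obtain ⟨s, rfl⟩ := Nat.exists_eq_add_of_le' hs
  obtain ⟨r, rfl⟩ := Nat.exists_eq_add_of_le' hr
  rw [pow_succ, pow_succ', mul_assoc, ← mul_assoc (S.z a) (S.z b), S.z_mul_z h, zero_mul, mul_zero]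

lemma chi_comm_z (i j : Fin 2) (t : ℕ) : Commute (chi S.x i j t) (S.z (i + j)) := by
  induction t generalizing i j with
  | zero => exact Commute.one_left _
  | succ t ih =>
    rw [chi]
    refine (S.x_comm_z i j).mul_left ?_
    have := ih (i + 1) (j + 1)
    rwa [fin2_shift] at this

lemma z_pow_mul_chi {i j a : Fin 2} (h : i + j ≠ a) {s t : ℕ} (hs : 1 ≤ s) (ht : 1 ≤ t) :
    S.z a ^ s * chi S.x i j t = 0 := by
  obtain ⟨s, rfl⟩ := Nat.exists_eq_add_of_le' hs
  obtain ⟨t, rfl⟩ := Nat.exists_eq_add_of_le' ht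
  rw [pow_succ, chi, mul_assoc, ← mul_assoc (S.z a), S.z_mul_x h, zero_mul, mul_zero]

lemma z_pow_mul_c {i j a : Fin 2} (h : i + j ≠ a) {r s t : ℕ} (hr : 1 ≤ r) (hs : 1 ≤ s) :
    S.z a ^ r * S.c s t i j = 0 := by
  rw [c, ← mul_assoc, S.z_pow_mul_z_pow h.symm hr hs, zero_mul]

lemma chi_even_add (x : Fin 2 → Fin 2 → A) (i j : Fin 2) (r m : ℕ) :
    chi x i j (2 * r + m) = chi x i j (2 * r) * chi x i j m := by
  induction r with
  | zero => simp [chi]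
  | succ r ih =>
    have h2 : i + 1 + 1 = i := fin2_two i
    have h3 : j + 1 + 1 = j := fin2_two j
    rw [show 2 * (r + 1) + m = (2 * r + m) + 1 + 1 by ring,
      show 2 * (r + 1) = 2 * r + 1 + 1 by ring]
    simp only [chi, h2, h3, ih, mul_assoc]

lemma chi_odd_add (x : Fin 2 → Fin 2 → A) {t : ℕ} (ht : Odd t) (i j : Fin 2) (m : ℕ) :
    chi x i j t * chi x (i + 1) (j + 1) m = chi x i j (t + m) := by
  obtain ⟨r, rfl⟩ := ht
  rw [add_assoc, chi_even_add, chi_even_add, add_comm 1 m]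
  simp only [chi, mul_one, mul_assoc]

lemma kap_sq (a : Fin 2) : S.kap a * S.kap a = 1 := by
  have := S.hlam
  unfold kap; split_ifs
  · simp
  · rcases this with h | h <;> simp [h]

lemma nu_sq (a : Fin 2) : S.nu a * S.nu a = 1 := by
  have := S.hμ
  unfold nu; split_ifs
  · simp
  · rcases this with h | h <;> simp [h]

lemma nu_ne (a : Fin 2) : S.nu a ≠ 0 := left_ne_zero_of_mul_eq_one (S.nu_sq a)
lemma kap_ne (a : Fin 2) : S.kap a ≠ 0 := left_ne_zero_of_mul_eq_one (S.kap_sq a)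

lemma chi_n (i j : Fin 2) : chi S.x i j S.n = S.kap (i + j) • chi S.x (i + 1) (j + 1) S.n := by
  have h1 := S.rel_chi1
  have h2 := S.rel_chi2
  have h3 := S.kap_sq 1
  have h4 : S.kap 1 = S.lam := by simp [kap]
  rw [h4] at h3
  fin_cases i <;> fin_cases j <;> simp [kap, h1, h2, smul_smul, h3]

/-- Beyond length `n` the alternating products fold back. -/
lemma chi_fold (i j : Fin 2) (m : ℕ) (hm : m ≤ S.n) :
    chi S.x i j (S.n + m)
      = S.kap (i + j) • (S.z (i + j) ^ m * chi S.x (i + 1) (j + 1) (S.n - m)) := by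
  induction m generalizing i j with
  | zero => simpa using S.chi_n i j
  | succ m ih =>
    have h1 : S.n - m = (S.n - (m + 1)) + 1 := by omega
    have h2 : i + 1 + 1 = i := fin2_two i
    have h3 : j + 1 + 1 = j := fin2_two j
    rw [← add_assoc, chi, ih _ _ (by omega), fin2_shift, h1, chi, h2, h3, mul_smul_comm,
      ← mul_assoc, ((S.x_comm_z i j).pow_right m).eq, mul_assoc, ← mul_assoc (S.x i j), sq_x,
      ← mul_assoc, ← pow_succ]

lemma rel_z : S.z 0 ^ S.N + S.μ • S.z 1 ^ S.N = 1 := by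
  simpa [z, pow_mul] using S.rel_mu

lemma z_N_mul_x (i j : Fin 2) : S.z (i + j) ^ S.N * S.x i j = S.nu (i + j) • S.x i j := by
  have h := congrArg (· * S.x i j) S.rel_z
  simp only [add_mul, smul_mul_assoc, one_mul] at h
  have hz : ∀ a, i + j ≠ a → S.z a ^ S.N * S.x i j = 0 := by
    intro a ha
    have := S.z_pow_mul_chi ha S.hN (le_refl 1)
    simpa [chi] using this
  have hs := S.nu_sq 1
  rcases (by generalize i + j = a; revert a; decide : i + j = 0 ∨ i + j = 1) with h0 | h0
  · rw [hz 1 (by simp [h0]), smul_zero, add_zero] at h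
    rw [h0, h]; simp [nu]
  · rw [hz 0 (by simp [h0]), zero_add] at h
    have h1 : S.nu 1 = S.μ := by simp [nu]
    rw [h1] at hs
    rw [h0, h1]
    calc _ = (S.μ * S.μ) • (S.z 1 ^ S.N * S.x i j) := by rw [hs, one_smul]
      _ = _ := by rw [mul_smul, h]

lemma z_pow_add_N (a : Fin 2) {s : ℕ} (hs : 1 ≤ s) : S.z a ^ (S.N + s) = S.nu a • S.z a ^ s := by
  obtain ⟨s, rfl⟩ := Nat.exists_eq_add_of_le' hs
  have h := S.z_N_mul_x 0 a
  rw [zero_add] at h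
  have h2 : S.z a ^ S.N * S.z a = S.nu a • S.z a := by
    nth_rw 2 [z]
    rw [pow_two, ← mul_assoc, h, smul_mul_assoc, ← pow_two]; rfl
  rw [pow_add, pow_succ', ← mul_assoc, h2, smul_mul_assoc]

lemma c_N (t : ℕ) (ht : 1 ≤ t) (i j : Fin 2) :
    S.c S.N t i j = S.nu (i + j) • chi S.x i j t := by
  obtain ⟨t, rfl⟩ := Nat.exists_eq_add_of_le' ht
  rw [c, chi, ← mul_assoc, z_N_mul_x, smul_mul_assoc]

lemma z0_pow_reduce (b : ℕ) (hb : 1 ≤ b) : ∃ b', 1 ≤ b' ∧ b' ≤ S.N ∧ S.z 0 ^ b = S.z 0 ^ b' := by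
  induction b using Nat.strong_induction_on with
  | _ b ih =>
    by_cases h : b ≤ S.N
    · exact ⟨b, hb, h, rfl⟩
    · have hN := S.hN
      obtain ⟨b', h1, h2, h3⟩ := ih (b - S.N) (by omega) (by omega)
      refine ⟨b', h1, h2, ?_⟩
      rw [← h3, show b = S.N + (b - S.N) by omega, S.z_pow_add_N 0 (by omega)]
      simp [nu]

lemma chi_succ_right {t : ℕ} (ht : Odd t) (i j : Fin 2) :
    chi S.x i j t * S.x (i + 1) (j + 1) = chi S.x i j (t + 1) := by
  have := chi_odd_add S.x ht i j 1
  simpa [chi] using this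

/-- For odd `t` the word `χ_{ij}^t` is a palindrome, so its square telescopes. -/
lemma chi_odd_sq {t : ℕ} (ht : Odd t) (i j : Fin 2) :
    chi S.x i j t * chi S.x i j t = S.z (i + j) ^ t := by
  obtain ⟨r, rfl⟩ := ht
  induction r generalizing i j with
  | zero => simp [chi, sq_x]
  | succ r ih =>
    have h2 : i + 1 + 1 = i := fin2_two i
    have h3 : j + 1 + 1 = j := fin2_two j
    have e1 : chi S.x i j (2 * (r + 1) + 1)
        = S.x i j * (chi S.x (i + 1) (j + 1) (2 * r + 1) * S.x i j) := by
      have := S.chi_succ_right (t := 2 * r + 1) ⟨r, rfl⟩ (i + 1) (j + 1)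
      rw [h2, h3] at this
      rw [this]; rfl
    have ih' := ih (i + 1) (j + 1)
    rw [fin2_shift] at ih'
    rw [e1]
    calc _ = S.x i j * chi S.x (i + 1) (j + 1) (2 * r + 1) * (S.x i j * S.x i j)
          * chi S.x (i + 1) (j + 1) (2 * r + 1) * S.x i j := by simp only [mul_assoc]
      _ = S.x i j * (chi S.x (i + 1) (j + 1) (2 * r + 1) * S.z (i + j))
          * chi S.x (i + 1) (j + 1) (2 * r + 1) * S.x i j := by rw [sq_x]; simp only [mul_assoc]
      _ = S.x i j * S.z (i + j) * (chi S.x (i + 1) (j + 1) (2 * r + 1)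
          * chi S.x (i + 1) (j + 1) (2 * r + 1)) * S.x i j := by
        have := S.chi_comm_z (i + 1) (j + 1) (2 * r + 1)
        rw [fin2_shift] at this
        rw [this.eq]; simp only [mul_assoc]
      _ = S.z (i + j) * S.z (i + j) ^ (2 * r + 1) * (S.x i j * S.x i j) := by
        rw [ih', (S.x_comm_z i j).eq, mul_assoc (S.z (i + j)),
          ((S.x_comm_z i j).pow_right (2 * r + 1)).eq]
        simp only [mul_assoc]
      _ = _ := by
        rw [sq_x, ← pow_succ', ← pow_succ]
        congr 1

/-- For even `t` the two alternating words of length `t` are mutually inverse up to `z ^ t`. -/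
lemma chi_even_mul {t : ℕ} (ht : Even t) (i j : Fin 2) :
    chi S.x i j t * chi S.x (i + 1) (j + 1) t = S.z (i + j) ^ t := by
  obtain ⟨r, rfl⟩ := ht
  rcases Nat.eq_zero_or_pos r with rfl | hr
  · simp [chi]
  obtain ⟨r, rfl⟩ := Nat.exists_eq_add_of_le' hr
  have h2 : i + 1 + 1 = i := fin2_two i
  have h3 : j + 1 + 1 = j := fin2_two j
  have ho : Odd (2 * r + 1) := ⟨r, rfl⟩
  have e1 : chi S.x i j (r + 1 + (r + 1)) = S.x i j * chi S.x (i + 1) (j + 1) (2 * r + 1) := by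
    rw [show r + 1 + (r + 1) = 2 * r + 1 + 1 by ring, chi]
  have e2 : chi S.x (i + 1) (j + 1) (r + 1 + (r + 1))
      = chi S.x (i + 1) (j + 1) (2 * r + 1) * S.x i j := by
    have := S.chi_succ_right ho (i + 1) (j + 1)
    rw [h2, h3] at this
    rw [this, show r + 1 + (r + 1) = 2 * r + 1 + 1 by ring]
  have h4 := S.chi_odd_sq ho (i + 1) (j + 1)
  rw [fin2_shift] at h4
  rw [e1, e2, mul_assoc, ← mul_assoc (chi _ _ _ _), h4,
    ← ((S.x_comm_z i j).pow_right (2 * r + 1)).eq, ← mul_assoc, sq_x, ← pow_succ']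
  congr 1; ring

lemma c_mul_c {s t : ℕ} (i j i' j' : Fin 2) (h : i + j = i' + j') :
    S.c s t i j * S.c s t i' j' = S.z (i + j) ^ (2 * s) * (chi S.x i j t * chi S.x i' j' t) := by
  rw [c, c, ← h, mul_assoc, ← mul_assoc (chi S.x i j t), ((S.chi_comm_z i j t).pow_right s).eq,
    two_mul, pow_add]
  simp only [mul_assoc]

lemma c_sq {s t : ℕ} (ht : Odd t) (i j : Fin 2) :
    S.c s t i j ^ 2 = S.z (i + j) ^ (2 * s + t) := by
  rw [pow_two, S.c_mul_c _ _ _ _ rfl, S.chi_odd_sq ht, pow_add]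

/-- The diagonal entries of the comatrix coalgebra commute if `t` is even or `2t = n`. -/
lemma c_comm {s t : ℕ} (h : Even t ∨ (Odd t ∧ 2 * t = S.n)) :
    S.c s t 0 0 * S.c s t 1 1 = S.c s t 1 1 * S.c s t 0 0 := by
  rw [S.c_mul_c 0 0 1 1 rfl, S.c_mul_c 1 1 0 0 rfl]
  congr 1
  rcases h with h | ⟨h, h'⟩
  · exact (S.chi_even_mul h 0 0).trans (S.chi_even_mul h 1 1).symm
  · have h1 := chi_odd_add S.x h 0 0 t
    have h2 := chi_odd_add S.x h 1 1 t
    rw [← two_mul, h'] at h1 h2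
    exact h1.trans (S.rel_chi2.trans h2.symm)

/-! ### The coalgebra structure -/

lemma comul_x (i j : Fin 2) : Coalgebra.comul (R := k) (S.x i j)
    = S.x i 0 ⊗ₜ[k] S.x 0 j + S.x i 1 ⊗ₜ[k] S.x 1 j := by
  simpa [chi] using S.comul_chi i j 1 le_rfl

lemma comul_z (a : Fin 2) : Coalgebra.comul (R := k) (S.z a)
    = S.z 0 ⊗ₜ[k] S.z a + S.z 1 ⊗ₜ[k] S.z (1 + a) := by
  rw [z, pow_two, Bialgebra.comul_mul, comul_x]
  have h1 : S.x 0 0 * S.x 0 1 = 0 := S.x_mul_x (by decide)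
  have h2 : S.x 0 1 * S.x 0 0 = 0 := S.x_mul_x (by decide)
  simp only [mul_add, add_mul, Algebra.TensorProduct.tmul_mul_tmul, h1, h2, sq_x,
    TensorProduct.zero_tmul, add_zero, zero_add]

lemma comul_z_pow (a : Fin 2) {s : ℕ} (hs : 1 ≤ s) : Coalgebra.comul (R := k) (S.z a ^ s)
    = (S.z 0 ^ s) ⊗ₜ[k] (S.z a ^ s) + (S.z 1 ^ s) ⊗ₜ[k] (S.z (1 + a) ^ s) := by
  induction s, hs using Nat.le_induction with
  | base => simpa using S.comul_z a
  | succ s hs ih =>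
    have h1 : S.z 0 ^ s * S.z 1 = 0 := by
      simpa using S.z_pow_mul_z_pow (a := 0) (b := 1) (by decide) hs le_rfl
    have h2 : S.z 1 ^ s * S.z 0 = 0 := by
      simpa using S.z_pow_mul_z_pow (a := 1) (b := 0) (by decide) hs le_rfl
    rw [pow_succ, Bialgebra.comul_mul, ih, comul_z]
    simp only [mul_add, add_mul, Algebra.TensorProduct.tmul_mul_tmul, h1, h2, ← pow_succ,
      TensorProduct.zero_tmul, add_zero, zero_add]

lemma comul_c {s t : ℕ} (hs : 1 ≤ s) (i j : Fin 2) : Coalgebra.comul (R := k) (S.c s t i j)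
    = S.c s t i 0 ⊗ₜ[k] S.c s t 0 j + S.c s t i 1 ⊗ₜ[k] S.c s t 1 j := by
  rcases Nat.eq_zero_or_pos t with rfl | ht
  · simp only [c, chi, mul_one]
    rw [S.comul_z_pow _ hs]
    fin_cases i
    · simp
    · fin_cases j <;> simp [add_comm]
  · rw [c, Bialgebra.comul_mul, S.comul_z_pow _ hs, S.comul_chi _ _ _ ht]
    have h : ∀ a i j : Fin 2, i + j ≠ a → S.z a ^ s * chi S.x i j t = 0 :=
      fun a i j h => S.z_pow_mul_chi h hs ht
    simp only [mul_add, add_mul, Algebra.TensorProduct.tmul_mul_tmul]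
    fin_cases i <;> fin_cases j <;>
      simp [c, h 0 0 1, h 0 1 0, h 1 0 0, h 1 1 1, add_comm]

lemma counit_z_pow (a : Fin 2) {s : ℕ} (hs : 1 ≤ s) :
    Coalgebra.counit (R := k) (S.z a ^ s) = if a = 0 then 1 else 0 := by
  rw [z, ← pow_mul, Bialgebra.counit_pow, S.counit_x]
  fin_cases a
  · simp
  · have : 2 * s ≠ 0 := by omega
    simp [this]

lemma counit_chi (i j : Fin 2) {t : ℕ} (ht : 1 ≤ t) :
    Coalgebra.counit (R := k) (chi S.x i j t) = if i = j then 1 else 0 := by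
  induction t, ht using Nat.le_induction generalizing i j with
  | base => simp [chi, S.counit_x]
  | succ t ht ih =>
    rw [chi, Bialgebra.counit_mul, ih, S.counit_x]
    simp

lemma counit_c {s t : ℕ} (hs : 1 ≤ s) (i j : Fin 2) :
    Coalgebra.counit (R := k) (S.c s t i j) = if i = j then 1 else 0 := by
  have hij : i + j = 0 ↔ i = j := by revert i j; decide
  rcases Nat.eq_zero_or_pos t with rfl | ht
  · simp only [c, chi, mul_one]
    rw [S.counit_z_pow _ hs]
    simp only [hij]
  · rw [c, Bialgebra.counit_mul, S.counit_z_pow _ hs, S.counit_chi _ _ ht]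
    simp only [hij]
    split_ifs <;> simp

/-! ### Blocks of the basis -/

/-- The index set of the given basis. -/
abbrev Idx : Type := Fin 2 × Fin (2 * S.N) × Fin S.n

/-- The given basis. -/
def B : Module.Basis S.Idx k A :=
  Module.Basis.mk S.basis_indep (by rw [S.basis_span])

lemma B_apply (a : Fin 2) (σ : Fin (2 * S.N)) (τ : Fin S.n) :
    S.B (a, σ, τ) = S.x 0 a ^ ((σ : ℕ) + 1) * chi S.x 1 (1 + a) τ := by
  rw [B, Module.Basis.mk_apply]
  fin_cases a <;> simp

/-- The block `(s, t)` of the basis vector with index `p`: the pair with `1 ≤ s ≤ N`, `t ≤ n`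
such that the vector is proportional to some `c s t i j`. -/
def blk (p : S.Idx) : ℕ × ℕ :=
  if Odd (p.2.1 : ℕ) then (((p.2.1 : ℕ) + 1) / 2, (p.2.2 : ℕ))
  else (if (p.2.1 : ℕ) = 0 then S.N else (p.2.1 : ℕ) / 2, (p.2.2 : ℕ) + 1)

/-- The row `i` for which the basis vector with index `p` is proportional to `c s t i j`. -/
def row (p : S.Idx) : Fin 2 := if Odd (p.2.1 : ℕ) then 1 else 0

lemma c_one_eq (j : Fin 2) {s t : ℕ} (hs : 1 ≤ s) (hsN : s ≤ S.N) (ht : t < S.n) :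
    S.c s t 1 j = S.B (1 + j, ⟨2 * s - 1, by omega⟩, ⟨t, ht⟩) := by
  rw [B_apply]
  simp only
  rw [show 2 * s - 1 + 1 = 2 * s by omega, show 1 + (1 + j) = j by revert j; decide, pow_mul]
  rfl

lemma c_zero_eq (j : Fin 2) {s t : ℕ} (hsN : s < S.N) (ht : t < S.n) :
    S.c s (t + 1) 0 j = S.B (j, ⟨2 * s, by omega⟩, ⟨t, ht⟩) := by
  rw [B_apply]
  simp only
  rw [pow_succ, pow_mul, c, chi, zero_add, zero_add, add_comm 1 j, mul_assoc]
  rfl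

lemma c_zero_N_eq (j : Fin 2) {t : ℕ} (ht : t < S.n) :
    S.c S.N (t + 1) 0 j = S.nu j • S.B (j, ⟨0, by have := S.hN; omega⟩, ⟨t, ht⟩) := by
  have hN := S.hN
  have := S.c_zero_eq j (s := 0) (t := t) (by omega) ht
  rw [S.c_N _ (by omega), zero_add]
  rw [c, pow_zero, one_mul] at this
  rw [this]

/-- Away from `t = 0` in row `0` and `t = n` in row `1`, the elements `c s t i j` are
nonzero multiples of basis vectors. -/
lemma c_eq_B {s t : ℕ} (hs : 1 ≤ s) (hsN : s ≤ S.N) (i j : Fin 2)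
    (ht : i = 0 ∧ 1 ≤ t ∧ t ≤ S.n ∨ i = 1 ∧ t < S.n) :
    ∃ (p : S.Idx) (u : k), u ≠ 0 ∧ S.c s t i j = u • S.B p ∧ S.blk p = (s, t) ∧
      S.row p = i ∧ p.1 = i + j := by
  rcases ht with ⟨rfl, h1, h2⟩ | ⟨rfl, h2⟩
  · obtain ⟨t, rfl⟩ := Nat.exists_eq_add_of_le' h1
    rcases hsN.eq_or_lt with rfl | hlt
    · exact ⟨_, _, S.nu_ne j, S.c_zero_N_eq j h2, by simp [blk], by simp [row], by simp⟩
    · refine ⟨_, 1, one_ne_zero, by rw [one_smul]; exact S.c_zero_eq j hlt h2, ?_,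
        by simp [row], by simp⟩
      have : s ≠ 0 := by omega
      simp [blk, this]
  · have ho : Odd (2 * s - 1) := ⟨s - 1, by omega⟩
    have : (2 * s - 1 + 1) / 2 = s := by omega
    exact ⟨_, 1, one_ne_zero, by rw [one_smul]; exact S.c_one_eq j hs hsN h2,
      by simp [blk, ho, this], by simp [row, ho], rfl⟩

lemma B_eq_c (p : S.Idx) : 1 ≤ (S.blk p).1 ∧ (S.blk p).1 ≤ S.N ∧ (S.blk p).2 ≤ S.n ∧
    ∃ (i j : Fin 2) (u : k), S.B p = u • S.c (S.blk p).1 (S.blk p).2 i j := by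
  obtain ⟨a, ⟨σ, hσ⟩, ⟨τ, hτ⟩⟩ := p
  have hN := S.hN
  by_cases ho : Odd σ
  · obtain ⟨r, rfl⟩ := ho
    have h : S.blk (a, ⟨2 * r + 1, hσ⟩, ⟨τ, hτ⟩) = (r + 1, τ) := by
      simp [blk]; omega
    rw [h]
    refine ⟨by simp, by simp only; omega, hτ.le, 1, 1 + a, 1, ?_⟩
    simp only
    rw [S.c_one_eq (1 + a) (by omega) (by omega) hτ, one_smul]
    rw [show 1 + (1 + a) = a by clear h; revert a; decide]
    rfl
  · obtain ⟨r, rfl⟩ := Nat.not_odd_iff_even.1 ho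
    rcases Nat.eq_zero_or_pos r with rfl | hr
    · have h : S.blk (a, ⟨0 + 0, hσ⟩, ⟨τ, hτ⟩) = (S.N, τ + 1) := by simp [blk]
      rw [h]
      refine ⟨hN, le_rfl, hτ, 0, a, S.nu a, ?_⟩
      simp only
      rw [S.c_zero_N_eq a hτ, smul_smul, nu_sq, one_smul]
    · have h : S.blk (a, ⟨r + r, hσ⟩, ⟨τ, hτ⟩) = (r, τ + 1) := by
        have : r ≠ 0 := by omega
        simp [blk, this, ← two_mul]
      rw [h]
      refine ⟨hr, by simp only; omega, hτ, 0, a, 1, ?_⟩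
      simp only
      rw [S.c_zero_eq a (by omega) hτ, one_smul]
      congr 4; omega

/-- The projection of `A` onto the span of the basis vectors in block `i`. -/
def proj (i : ℕ × ℕ) : A →ₗ[k] A :=
  S.B.constr k fun p => if S.blk p = i then S.B p else 0

lemma proj_B (i : ℕ × ℕ) (p : S.Idx) : S.proj i (S.B p) = if S.blk p = i then S.B p else 0 := by
  rw [proj, Module.Basis.constr_basis]

lemma proj_c {s t : ℕ} (hs : 1 ≤ s) (hsN : s ≤ S.N) (ht : t ≤ S.n) (i j : Fin 2) (b : ℕ × ℕ) :
    S.proj b (S.c s t i j) = if (s, t) = b then S.c s t i j else 0 := by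
  have hn := S.hn
  -- entries that are multiples of basis vectors; the remaining ones (`t = 0` in row `0`,
  -- `t = n` in row `1`) are multiples of an entry in the other row
  have key : ∀ i j : Fin 2, (i = 0 ∧ 1 ≤ t ∧ t ≤ S.n ∨ i = 1 ∧ t < S.n) →
      S.proj b (S.c s t i j) = if (s, t) = b then S.c s t i j else 0 := by
    intro i j h
    obtain ⟨p, u, -, h1, h2, -⟩ := S.c_eq_B hs hsN i j h
    rw [h1, map_smul, proj_B, h2]
    split_ifs <;> simp
  rcases (by revert i; decide : i = 0 ∨ i = 1) with rfl | rfl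
  · rcases Nat.eq_zero_or_pos t with rfl | h
    · have e : S.c s 0 0 j = S.c s 0 1 (1 + j) := by
        simp only [c, chi]
        rw [show (1 : Fin 2) + (1 + j) = 0 + j by revert j; decide]
      rw [e]
      exact key _ _ (Or.inr ⟨rfl, by omega⟩)
    · exact key _ _ (Or.inl ⟨rfl, h, ht⟩)
  · rcases ht.eq_or_lt with rfl | h
    · have e : S.c s S.n 1 j = S.kap (1 + j) • S.c s S.n 0 (j + 1) := by
        simp only [c]
        rw [S.chi_n, mul_smul_comm, show (1 : Fin 2) + j = 0 + (j + 1) by revert j; decide]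
        rfl
      rw [e, map_smul, key _ _ (Or.inl ⟨rfl, by omega, le_rfl⟩)]
      split_ifs <;> simp
    · exact key _ _ (Or.inr ⟨rfl, h⟩)

lemma repr_proj (i : ℕ × ℕ) (v : A) (p : S.Idx) :
    S.B.repr (S.proj i v) p = if S.blk p = i then S.B.repr v p else 0 := by
  have : (S.B.coord p).comp (S.proj i) = if S.blk p = i then S.B.coord p else 0 := by
    apply S.B.ext
    intro q
    simp only [LinearMap.comp_apply, proj_B]
    by_cases hqp : q = p
    · subst hqp; split_ifs <;> simp
    · split_ifs <;> simp [hqp]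
  have h := congrArg (fun f : A →ₗ[k] k => f v) this
  simp only [LinearMap.comp_apply, Module.Basis.coord_apply] at h
  rw [h]
  split_ifs <;> simp

lemma proj_mem_span {s t : ℕ} (v : A) :
    S.proj (s, t) v ∈ Submodule.span k (Set.range fun q : Fin 2 × Fin 2 => S.c s t q.1 q.2) := by
  suffices h : LinearMap.range (S.proj (s, t)) ≤
      Submodule.span k (Set.range fun q : Fin 2 × Fin 2 => S.c s t q.1 q.2) from
    h ⟨v, rfl⟩
  rw [LinearMap.range_eq_map, ← S.B.span_eq, Submodule.map_span, Submodule.span_le]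
  rintro _ ⟨_, ⟨p, rfl⟩, rfl⟩
  rw [proj_B]
  split_ifs with h
  · obtain ⟨-, -, -, i, j, u, hu⟩ := S.B_eq_c p
    rw [hu, h]
    exact Submodule.smul_mem _ _ (Submodule.subset_span ⟨(i, j), rfl⟩)
  · exact Submodule.zero_mem _

lemma c_indep {s t : ℕ} (hs : 1 ≤ s) (hsN : s ≤ S.N) (ht : 1 ≤ t) (htn : t < S.n) :
    LinearIndependent k (fun q : Fin 2 × Fin 2 => S.c s t q.1 q.2) := by
  have h : ∀ q : Fin 2 × Fin 2, ∃ (p : S.Idx) (u : k), u ≠ 0 ∧ S.c s t q.1 q.2 = u • S.B p ∧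
      S.blk p = (s, t) ∧ S.row p = q.1 ∧ p.1 = q.1 + q.2 := by
    rintro ⟨i, j⟩
    apply S.c_eq_B hs hsN
    rcases (by revert i; decide : i = 0 ∨ i = 1) with rfl | rfl
    · exact Or.inl ⟨rfl, ht, htn.le⟩
    · exact Or.inr ⟨rfl, htn⟩
  choose p u hu hc _ hr ha using h
  have hinj : Function.Injective p := by
    intro q q' hq
    have h1 := hr q
    have h2 := ha q
    rw [hq, hr] at h1
    rw [hq, ha, h1] at h2
    exact Prod.ext h1.symm (add_left_cancel h2).symm
  have := (S.B.linearIndependent.comp p hinj).units_smul (fun q => Units.mk0 (u q) (hu q))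
  convert this using 2 with q
  exact hc q

/-- Coordinate functionals for four linearly independent elements. -/
lemma exists_dual {y : Fin 2 → Fin 2 → A}
    (hli : LinearIndependent k (fun q : Fin 2 × Fin 2 => y q.1 q.2)) :
    ∃ g : Fin 2 → Fin 2 → A →ₗ[k] k, ∀ a b i j,
      g a b (y i j) = if i = a ∧ j = b then 1 else 0 := by
  rw [linearIndependent_iff_injective_fintypeLinearCombination] at hli
  obtain ⟨L, hL⟩ := LinearMap.exists_leftInverse_of_injective _ (LinearMap.ker_eq_bot.2 hli)
  refine ⟨fun a b => (LinearMap.proj (a, b)).comp L, fun a b i j => ?_⟩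
  have h := congrArg (fun f => f (Pi.single (i, j) (1 : k)) (a, b)) hL
  simp only [LinearMap.comp_apply, Fintype.linearCombination_apply_single, one_smul,
    LinearMap.id_apply] at h
  simp only [LinearMap.comp_apply, LinearMap.proj_apply]
  rw [h]
  simp only [Pi.single_apply, Prod.mk.injEq]
  congr 1
  simp only [eq_comm]

lemma x_indep (hn : 2 < S.n) : LinearIndependent k (fun q : Fin 2 × Fin 2 => S.x q.1 q.2) := by
  have h := (S.c_indep S.hN le_rfl le_rfl (by omega : 1 < S.n)).units_smul
    (fun q => Units.mk0 (S.nu (q.1 + q.2)) (S.nu_ne _))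
  convert h using 2 with q
  rw [Pi.smul_apply', S.c_N _ le_rfl, Units.smul_def]
  simp [smul_smul, nu_sq, chi]

lemma x_noncomm (hn : 2 < S.n) : S.x 0 0 * S.x 1 1 ≠ S.x 1 1 * S.x 0 0 := by
  intro h
  have h1 := (S.c_indep S.hN le_rfl (by omega : 1 ≤ 2) hn).injective
  have : ((0, 0) : Fin 2 × Fin 2) = (1, 1) := by
    apply h1
    simp [S.c_N, chi, h]
  simp at this

/-! ### Comatrix elements lie in one block -/

/-- The projection onto a block is convolution with its counit, from the left. -/
lemma proj_left (b : ℕ × ℕ) (v : A) :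
    TensorProduct.lid k A (LinearMap.rTensor A ((Coalgebra.counit (R := k)).comp (S.proj b))
      (Coalgebra.comul (R := k) v)) = S.proj b v := by
  suffices h : (TensorProduct.lid k A).toLinearMap ∘ₗ
      (LinearMap.rTensor A ((Coalgebra.counit (R := k)).comp (S.proj b))) ∘ₗ
      (Coalgebra.comul (R := k)) = S.proj b from congrArg (fun f => f v) h
  apply S.B.ext
  intro p
  obtain ⟨h1, h2, h3, i, j, u, hu⟩ := S.B_eq_c p
  rw [hu, map_smul, map_smul]
  congr 1
  simp only [LinearMap.comp_apply, LinearEquiv.coe_coe, S.comul_c h1, map_add,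
    LinearMap.rTensor_tmul, S.proj_c h1 h2 h3, TensorProduct.lid_tmul]
  split_ifs
  · rw [S.counit_c h1, S.counit_c h1]
    fin_cases i <;> simp
  · simp

/-- The projection onto a block is convolution with its counit, from the right. -/
lemma proj_right (b : ℕ × ℕ) (v : A) :
    TensorProduct.rid k A (LinearMap.lTensor A ((Coalgebra.counit (R := k)).comp (S.proj b))
      (Coalgebra.comul (R := k) v)) = S.proj b v := by
  suffices h : (TensorProduct.rid k A).toLinearMap ∘ₗ
      (LinearMap.lTensor A ((Coalgebra.counit (R := k)).comp (S.proj b))) ∘ₗ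
      (Coalgebra.comul (R := k)) = S.proj b from congrArg (fun f => f v) h
  apply S.B.ext
  intro p
  obtain ⟨h1, h2, h3, i, j, u, hu⟩ := S.B_eq_c p
  rw [hu, map_smul, map_smul]
  congr 1
  simp only [LinearMap.comp_apply, LinearEquiv.coe_coe, S.comul_c h1, map_add,
    LinearMap.lTensor_tmul, S.proj_c h1 h2 h3, TensorProduct.rid_tmul]
  split_ifs
  · rw [S.counit_c h1, S.counit_c h1]
    fin_cases j <;> simp
  · simp

section comatrix

variable {y : Fin 2 → Fin 2 → A}

/-- A block projection is central in the convolution algebra, so it acts by a scalar on any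
four linearly independent comatrix elements. -/
lemma proj_scalar (hy : ∀ i j, Coalgebra.comul (R := k) (y i j)
      = y i 0 ⊗ₜ[k] y 0 j + y i 1 ⊗ₜ[k] y 1 j)
    (hli : LinearIndependent k (fun q : Fin 2 × Fin 2 => y q.1 q.2)) (b : ℕ × ℕ) :
    ∃ γ : k, ∀ i j, S.proj b (y i j) = γ • y i j := by
  obtain ⟨g, hg⟩ := exists_dual hli
  obtain ⟨F, hF⟩ : ∃ F : Fin 2 → Fin 2 → k,
      ∀ i j, Coalgebra.counit (R := k) (S.proj b (y i j)) = F i j := ⟨_, fun _ _ => rfl⟩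
  have hl : ∀ i j, S.proj b (y i j) = F i 0 • y 0 j + F i 1 • y 1 j := by
    intro i j
    rw [← S.proj_left b (y i j), hy]
    simp [hF]
  have hr : ∀ i j, S.proj b (y i j) = F 0 j • y i 0 + F 1 j • y i 1 := by
    intro i j
    rw [← S.proj_right b (y i j), hy]
    simp [hF]
  have e1 := (hl 0 0).symm.trans (hr 0 0)
  have e2 := (hl 0 1).symm.trans (hr 0 1)
  have h01 : F 0 1 = 0 := by simpa [hg] using congrArg (g 1 0) e1
  have h10 : F 1 0 = 0 := by simpa [hg] using (congrArg (g 0 1) e1).symm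
  have h11 : F 0 0 = F 1 1 := by simpa [hg] using congrArg (g 0 1) e2
  refine ⟨F 0 0, fun i j => ?_⟩
  rw [hl]
  fin_cases i <;> simp [h01, h10, h11]

lemma exists_block (hy : ∀ i j, Coalgebra.comul (R := k) (y i j)
      = y i 0 ⊗ₜ[k] y 0 j + y i 1 ⊗ₜ[k] y 1 j)
    (hli : LinearIndependent k (fun q : Fin 2 × Fin 2 => y q.1 q.2)) :
    ∃ s t, 1 ≤ s ∧ s ≤ S.N ∧ t ≤ S.n ∧ ∀ i j,
      y i j ∈ Submodule.span k (Set.range fun q : Fin 2 × Fin 2 => S.c s t q.1 q.2) := by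
  have hne : y 0 0 ≠ 0 := hli.ne_zero (0, 0)
  obtain ⟨p, hp⟩ : ∃ p, S.B.repr (y 0 0) p ≠ 0 := by
    by_contra! h
    exact hne (S.B.repr.map_eq_zero_iff.1 (Finsupp.ext h))
  obtain ⟨γ, hγ⟩ := S.proj_scalar hy hli (S.blk p)
  have hγ0 : γ ≠ 0 := by
    rintro rfl
    have := S.repr_proj (S.blk p) (y 0 0) p
    rw [hγ] at this
    simp at this
    exact hp this.symm
  obtain ⟨h1, h2, h3, -⟩ := S.B_eq_c p
  refine ⟨_, _, h1, h2, h3, fun i j => ?_⟩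
  have : y i j = γ⁻¹ • S.proj (S.blk p) (y i j) := by
    rw [hγ, smul_smul, inv_mul_cancel₀ hγ0, one_smul]
  rw [this]
  exact Submodule.smul_mem _ _ (S.proj_mem_span _)

/-- Four linearly independent elements do not fit into a span of two vectors. This excludes the
blocks with `t = 0` and `t = n`, which are two-dimensional. -/
lemma not_small {w : Fin 2 → A}
    (hli : LinearIndependent k (fun q : Fin 2 × Fin 2 => y q.1 q.2))
    (h : ∀ i j, y i j ∈ Submodule.span k (Set.range w)) : False := by
  have h1 : Submodule.span k (Set.range fun q : Fin 2 × Fin 2 => y q.1 q.2)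
      ≤ Submodule.span k (Set.range w) := by
    rw [Submodule.span_le]
    rintro _ ⟨q, rfl⟩
    exact h _ _
  have : FiniteDimensional k (Submodule.span k (Set.range w)) :=
    FiniteDimensional.span_of_finite k (Set.finite_range w)
  have h2 := Submodule.finrank_mono h1
  rw [finrank_span_eq_card hli] at h2
  have h3 := finrank_range_le_card (R := k) w
  rw [Set.finrank] at h3
  simp at h2 h3
  omega

/-- Four linearly independent comatrix elements are a conjugate of the comatrix basis of one of
the four-dimensional blocks; the conjugation is recorded by a system `E` of matrix units. -/
lemma comatrix_form (hy : ∀ i j, Coalgebra.comul (R := k) (y i j)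
      = y i 0 ⊗ₜ[k] y 0 j + y i 1 ⊗ₜ[k] y 1 j)
    (hε : ∀ i j, Coalgebra.counit (R := k) (y i j) = if i = j then 1 else 0)
    (hli : LinearIndependent k (fun q : Fin 2 × Fin 2 => y q.1 q.2)) :
    ∃ (s t : ℕ) (E : Fin 2 → Fin 2 → Matrix (Fin 2) (Fin 2) k),
      1 ≤ s ∧ s ≤ S.N ∧ 1 ≤ t ∧ t < S.n ∧
      (∀ i j, y i j = E 0 0 i j • S.c s t 0 0 + E 1 1 i j • S.c s t 1 1
        + E 0 1 i j • S.c s t 0 1 + E 1 0 i j • S.c s t 1 0) ∧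
      (∀ a b c d, E a b * E c d = if b = c then E a d else 0) ∧ E 0 0 + E 1 1 = 1 := by
  obtain ⟨s, t, hs, hsN, htn, hmem⟩ := S.exists_block hy hli
  have ht : 1 ≤ t := by
    by_contra h
    obtain rfl : t = 0 := by omega
    refine not_small (w := fun a => S.z a ^ s) hli fun i j => ?_
    refine Submodule.span_mono ?_ (hmem i j)
    rintro _ ⟨q, rfl⟩
    exact ⟨q.1 + q.2, by simp [c, chi]⟩
  have htn' : t < S.n := by
    refine htn.lt_of_ne ?_
    rintro rfl
    refine not_small (w := fun a => S.c s S.n 0 a) hli fun i j => ?_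
    refine Submodule.span_le.2 ?_ (hmem i j)
    rintro _ ⟨⟨i, j⟩, rfl⟩
    rcases (by revert i; decide : i = 0 ∨ i = 1) with rfl | rfl
    · exact Submodule.subset_span ⟨j, rfl⟩
    · have e : S.c s S.n 1 j = S.kap (1 + j) • S.c s S.n 0 (j + 1) := by
        simp only [c]
        rw [S.chi_n, mul_smul_comm, show (1 : Fin 2) + j = 0 + (j + 1) by revert j; decide]
        rfl
      simp only [e]
      exact Submodule.smul_mem _ _ (Submodule.subset_span ⟨j + 1, rfl⟩)
  obtain ⟨g, hg⟩ := exists_dual (S.c_indep hs hsN ht htn')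
  have hE : ∀ i j, y i j = g 0 0 (y i j) • S.c s t 0 0 + g 1 1 (y i j) • S.c s t 1 1
        + g 0 1 (y i j) • S.c s t 0 1 + g 1 0 (y i j) • S.c s t 1 0 := by
    intro i j
    obtain ⟨m, hm⟩ := (Submodule.mem_span_range_iff_exists_fun k).1 (hmem i j)
    simp only [Fintype.sum_prod_type, Fin.sum_univ_two] at hm
    rw [← hm]
    simp only [map_add, map_smul, hg]
    simp
    abel
  refine ⟨s, t, fun a b => Matrix.of fun i j => g a b (y i j), hs, hsN, ht, htn', ?_, ?_, ?_⟩
  · simpa using hE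
  · intro a b c' d
    ext i j
    -- pair `Δ (y i j)`, computed in two ways, with a tensor product of coordinate functionals
    have h1 := congrArg (fun v => LinearMap.mul' k k (TensorProduct.map (g a b) (g c' d) v)) (hy i j)
    rw [hE i j] at h1
    simp only [map_add, map_smul, S.comul_c hs, TensorProduct.map_tmul, LinearMap.mul'_apply,
      hg] at h1
    simp only [Matrix.mul_apply, Fin.sum_univ_two, Matrix.of_apply]
    rw [← h1]
    fin_cases a <;> fin_cases b <;> fin_cases c' <;> fin_cases d <;> simp
  · ext i j
    have h1 := hε i j
    rw [hE i j] at h1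
    simp only [map_add, map_smul, S.counit_c hs] at h1
    simpa [Matrix.one_apply] using h1

end comatrix

/-! ### Diagonalising the conjugation -/

lemma c_mul_c_zero {s t : ℕ} (hs : 1 ≤ s) {i j i' j' : Fin 2} (h : i + j ≠ i' + j') :
    S.c s t i j * S.c s t i' j' = 0 := by
  rw [c, c, ← ((S.chi_comm_z i j t).pow_right s).eq, mul_assoc, ← mul_assoc (S.z (i + j) ^ s),
    S.z_pow_mul_z_pow h hs hs, zero_mul, mul_zero]

lemma z0_indep {a b m : ℕ} (ha : 1 ≤ a) (hb : 1 ≤ b) (hm : 1 ≤ m) (hmn : m < S.n) {p q r : k}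
    (h : p • S.z 0 ^ a + q • (S.z 0 ^ b * chi S.x 0 0 m) + r • (S.z 0 ^ b * chi S.x 1 1 m) = 0) :
    q = 0 ∧ r = 0 := by
  obtain ⟨a', ha1, ha2, ha3⟩ := S.z0_pow_reduce a ha
  obtain ⟨b', hb1, hb2, hb3⟩ := S.z0_pow_reduce b hb
  rw [ha3, hb3] at h
  have e0 : S.z 0 ^ a' = S.c a' 0 0 0 := by simp [c, chi]
  have e1 : S.z 0 ^ b' * chi S.x 0 0 m = S.c b' m 0 0 := rfl
  have e2 : S.z 0 ^ b' * chi S.x 1 1 m = S.c b' m 1 1 := rfl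
  rw [e0, e1, e2] at h
  have h' := congrArg (S.proj (b', m)) h
  have hne : ¬ (a', 0) = (b', m) := by
    intro h; rw [Prod.mk.injEq] at h; omega
  simp only [map_add, map_smul, map_zero, S.proj_c hb1 hb2 hmn.le, S.proj_c ha1 ha2 (Nat.zero_le _),
    if_true, if_neg hne, smul_zero, zero_add] at h'
  obtain ⟨g, hg⟩ := exists_dual (S.c_indep hb1 hb2 hm hmn)
  have hq := congrArg (g 0 0) h'
  have hr := congrArg (g 1 1) h'
  exact ⟨by simpa [hg] using hq, by simpa [hg] using hr⟩

/-- If `t` is odd and `2t ≠ n`, then `c 0 0 * c 1 1`, `c 1 1 * c 0 0` and the common square of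
`c 0 0` and `c 1 1` are linearly independent, even after multiplication by `z 0`; comparing
coefficients gives `q p = q r = 0`. The case `2t > n` is reduced to length `2n - 2t` by folding. -/
lemma offdiag_zero {s t : ℕ} (hs : 1 ≤ s) (ht : 1 ≤ t) (htn : t < S.n) (ho : Odd t)
    (h2 : 2 * t ≠ S.n) {p r q : k} (hpr : p + r = 1)
    (h : S.z 0 * ((p • S.c s t 0 0 + r • S.c s t 1 1) * (q • S.c s t 0 0 + (-q) • S.c s t 1 1))
      = 0) : q = 0 := by
  have sq0 := S.chi_odd_sq ho 0 0
  have sq1 := S.chi_odd_sq ho 1 1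
  have m01 := chi_odd_add S.x ho 0 0 t
  have m10 := chi_odd_add S.x ho 1 1 t
  rw [show (0 : Fin 2) + 0 = 0 from rfl] at sq0
  rw [show (1 : Fin 2) + 1 = 0 from rfl] at sq1 m10
  rw [show (0 : Fin 2) + 1 = 1 from rfl] at m01
  have key : (q * p - q * r) • S.z 0 ^ (2 * s + t + 1)
      + (-(q * p)) • (S.z 0 ^ (2 * s + 1) * chi S.x 0 0 (t + t))
      + (q * r) • (S.z 0 ^ (2 * s + 1) * chi S.x 1 1 (t + t)) = 0 := by
    rw [← h]
    simp only [mul_add, add_mul, smul_mul_assoc, mul_smul_comm, S.c_mul_c 0 0 0 0 rfl,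
      S.c_mul_c 0 0 1 1 rfl, S.c_mul_c 1 1 0 0 rfl, S.c_mul_c 1 1 1 1 rfl, sq0, sq1, m01, m10]
    simp only [show (0 : Fin 2) + 0 = 0 from rfl, show (1 : Fin 2) + 1 = 0 from rfl,
      ← mul_assoc, ← pow_add, ← pow_succ']
    module
  have main : q * p = 0 ∧ q * r = 0 := by
    rcases lt_or_gt_of_ne h2 with h3 | h3
    · have := S.z0_indep (by omega) (by omega) (by omega) (by omega) key
      simpa using this
    · have f0 := S.chi_fold 0 0 (2 * t - S.n) (by omega)
      have f1 := S.chi_fold 1 1 (2 * t - S.n) (by omega)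
      rw [show S.n + (2 * t - S.n) = t + t by omega] at f0 f1
      simp only [show (0 : Fin 2) + 0 = 0 from rfl, show (1 : Fin 2) + 1 = 0 from rfl,
        show (0 : Fin 2) + 1 = 1 from rfl, show S.kap 0 = 1 by simp [kap], one_smul] at f0 f1
      rw [f0, f1, ← mul_assoc, ← mul_assoc, ← pow_add, add_right_comm] at key
      have := S.z0_indep (by omega) (by omega) (by omega) (by omega) key
      simpa [and_comm] using this
  calc q = q * (p + r) := by rw [hpr, mul_one]
    _ = 0 := by rw [mul_add, main.1, main.2, add_zero]

/-- The scalars of the diagonal gauge transformation with parameter `ξ`. -/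
def gauge (ξ : k) (i j : Fin 2) : k := if i = j then 1 else if i = 0 then ξ else ξ⁻¹

lemma trace_units {E : Fin 2 → Fin 2 → Matrix (Fin 2) (Fin 2) k}
    (hE : ∀ a b c d, E a b * E c d = if b = c then E a d else 0) (h1 : E 0 0 + E 1 1 = 1) :
    E 1 1 0 0 = 1 - E 0 0 0 0 ∧ E 0 0 1 1 = 1 - E 0 0 0 0 ∧ E 1 1 1 1 = E 0 0 0 0 ∧
    E 1 1 0 1 = - E 0 0 0 1 ∧ E 1 1 1 0 = - E 0 0 1 0 ∧
    E 0 1 1 1 = - E 0 1 0 0 ∧ E 1 0 1 1 = - E 1 0 0 0 := by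
  have t0 : (E 0 0).trace = (E 1 1).trace := by
    rw [← (by simpa using hE 0 1 1 0 : E 0 1 * E 1 0 = E 0 0), Matrix.trace_mul_comm, hE]; simp
  have t1 : (E 0 1).trace = 0 := by
    rw [← (by simpa using hE 0 0 0 1 : E 0 0 * E 0 1 = E 0 1), Matrix.trace_mul_comm, hE]; simp
  have t2 : (E 1 0).trace = 0 := by
    rw [← (by simpa using hE 1 1 1 0 : E 1 1 * E 1 0 = E 1 0), Matrix.trace_mul_comm, hE]; simp
  have a00 := congrFun (congrFun h1 0) 0
  have a01 := congrFun (congrFun h1 0) 1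
  have a10 := congrFun (congrFun h1 1) 0
  have a11 := congrFun (congrFun h1 1) 1
  simp only [Matrix.add_apply, Matrix.one_apply] at a00 a01 a10 a11
  simp only [Matrix.trace_fin_two] at t0 t1 t2
  norm_num at a00 a01 a10 a11
  have hx : E 0 0 1 1 = 1 - E 0 0 0 0 := by linear_combination (1 / 2) * t0 + (1/2) * a00 + (1/2) * a11
  refine ⟨by linear_combination a00, hx, by linear_combination a11 - hx, by linear_combination a01,
    by linear_combination a10, by linear_combination t1, by linear_combination t2⟩

/-- Matrix units of `M₂` with `E 0 0` diagonal are the standard ones up to gauge and a swap. -/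
lemma diag_units {E : Fin 2 → Fin 2 → Matrix (Fin 2) (Fin 2) k}
    (hE : ∀ a b c d, E a b * E c d = if b = c then E a d else 0) (h1 : E 0 0 + E 1 1 = 1)
    (h01 : E 0 0 0 1 = 0) (h10 : E 0 0 1 0 = 0) :
    ∃ (ξ : k) (e : Fin 2), ξ ≠ 0 ∧ ∀ a b i j,
      E a b i j = if a = i + e ∧ b = j + e then gauge ξ i j else 0 := by
  obtain ⟨u1, u2, u3, u4, u5, -, -⟩ := trace_units hE h1
  rw [h01, neg_zero] at u4
  rw [h10, neg_zero] at u5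
  have hp : E 0 0 0 0 = 1 ∨ E 0 0 0 0 = 0 := by
    have := congrFun (congrFun (hE 0 0 0 0) 0) 0
    simp only [Matrix.mul_apply, Fin.sum_univ_two, h01, if_true] at this
    have h : E 0 0 0 0 * (E 0 0 0 0 - 1) = 0 := by linear_combination this
    rcases mul_eq_zero.1 h with h | h
    · exact Or.inr h
    · exact Or.inl (sub_eq_zero.1 h)
  have L : ∀ i j, (E 0 0 * E 0 1) i j = E 0 1 i j := by intro i j; rw [hE]; simp
  have R : ∀ i j, (E 0 1 * E 1 1) i j = E 0 1 i j := by intro i j; rw [hE]; simp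
  have L' : ∀ i j, (E 1 1 * E 1 0) i j = E 1 0 i j := by intro i j; rw [hE]; simp
  have R' : ∀ i j, (E 1 0 * E 0 0) i j = E 1 0 i j := by intro i j; rw [hE]; simp
  have Q : ∀ i j, (E 0 1 * E 1 0) i j = E 0 0 i j := by intro i j; rw [hE]; simp
  simp only [Matrix.mul_apply, Fin.sum_univ_two] at L R L' R' Q
  rcases hp with hp | hp
  · rw [hp, sub_self] at u1 u2
    rw [hp] at u3
    have a1 := R 0 0
    have a2 := L 1 0
    have a3 := L 1 1
    have b1 := L' 0 0
    have b2 := L' 0 1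
    have b3 := R' 1 1
    have q := Q 0 0
    simp only [hp, h01, h10, u1, u2, u3, u4, u5, zero_mul, mul_zero, add_zero] at a1 a2 a3 b1 b2 b3 q
    rw [← a1, ← b1, zero_mul, zero_add] at q
    have hξ : E 0 1 0 1 ≠ 0 := left_ne_zero_of_mul_eq_one q
    have hinv : E 1 0 1 0 = (E 0 1 0 1)⁻¹ := by field_simp; linear_combination q
    refine ⟨E 0 1 0 1, 0, hξ, ?_⟩
    intro a b i j
    fin_cases a <;> fin_cases b <;> fin_cases i <;> fin_cases j <;>
      simp [gauge, hp, h01, h10, u1, u2, u3, u4, u5, ← a1, ← a2, ← a3, ← b1, ← b2, ← b3, hinv]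
  · rw [hp, sub_zero] at u1 u2
    rw [hp] at u3
    have a1 := L 0 0
    have a2 := L 0 1
    have a3 := R 1 1
    have b1 := R' 0 0
    have b2 := L' 1 0
    have b3 := L' 1 1
    have q := Q 1 1
    simp only [hp, h01, h10, u1, u2, u3, u4, u5, zero_mul, mul_zero, add_zero] at a1 a2 a3 b1 b2 b3 q
    rw [← a3, zero_mul, add_zero] at q
    have hξ : E 1 0 0 1 ≠ 0 := right_ne_zero_of_mul_eq_one q
    have hinv : E 0 1 1 0 = (E 1 0 0 1)⁻¹ := by field_simp; linear_combination q
    refine ⟨E 1 0 0 1, 1, hξ, ?_⟩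
    intro a b i j
    fin_cases a <;> fin_cases b <;> fin_cases i <;> fin_cases j <;>
      simp [gauge, hp, h01, h10, u1, u2, u3, u4, u5, ← a1, ← a2, ← a3, ← b1, ← b2, ← b3, hinv]

/-- Comatrix elements satisfying the relevant relations of the generators have the
standard form. -/
lemma standard_form {y : Fin 2 → Fin 2 → A} (hy : ∀ i j, Coalgebra.comul (R := k) (y i j)
      = y i 0 ⊗ₜ[k] y 0 j + y i 1 ⊗ₜ[k] y 1 j)
    (hε : ∀ i j, Coalgebra.counit (R := k) (y i j) = if i = j then 1 else 0)
    (hli : LinearIndependent k (fun q : Fin 2 × Fin 2 => y q.1 q.2))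
    (hnc : y 0 0 * y 1 1 ≠ y 1 1 * y 0 0) (h01 : y 0 0 * y 0 1 = 0) (h10 : y 0 0 * y 1 0 = 0) :
    ∃ (s t : ℕ) (ξ : k) (e : Fin 2), 1 ≤ s ∧ s ≤ S.N ∧ 1 ≤ t ∧ t < S.n ∧ Odd t ∧
      2 * t ≠ S.n ∧ ξ ≠ 0 ∧ ∀ i j, y i j = gauge ξ i j • S.c s t (i + e) (j + e) := by
  obtain ⟨s, t, E, hs, hsN, ht, htn, hyE, hE, h1⟩ := S.comatrix_form hy hε hli
  obtain ⟨u1, u2, u3, u4, u5, u6, u7⟩ := trace_units hE h1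
  have o : ∀ i j i' j', i + j ≠ i' + j' → S.c s t i j * S.c s t i' j' = 0 :=
    fun i j i' j' h => S.c_mul_c_zero hs h
  have o1 := o 0 0 0 1 (by decide)
  have o2 := o 0 0 1 0 (by decide)
  have o3 := o 1 1 0 1 (by decide)
  have o4 := o 1 1 1 0 (by decide)
  have o5 := o 0 1 0 0 (by decide)
  have o6 := o 1 0 0 0 (by decide)
  have o7 := o 0 1 1 1 (by decide)
  have o8 := o 1 0 1 1 (by decide)
  have hnot : ¬ (Even t ∨ (Odd t ∧ 2 * t = S.n)) := by
    intro h
    have hc := S.c_comm (s := s) h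
    apply hnc
    rw [hyE 0 0, hyE 1 1, u1, u2, u3, u6, u7]
    simp only [mul_add, add_mul, smul_mul_assoc, mul_smul_comm, o1, o2, o3, o4, o5, o6, o7, o8,
      hc, smul_zero, add_zero, zero_add]
    module
  push Not at hnot
  have ho : Odd t := Nat.not_even_iff_odd.1 hnot.1
  have h2 := hnot.2 ho
  have hz : ∀ i j i' j' : Fin 2, i + j ≠ 0 →
      S.z 0 * (S.c s t i j * S.c s t i' j') = 0 := by
    intro i j i' j' h
    rw [← mul_assoc]
    have := S.z_pow_mul_c (t := t) h (le_refl 1) hs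
    rw [pow_one] at this
    rw [this, zero_mul]
  have hz1 : ∀ i' j', S.z 0 * (S.c s t 0 1 * S.c s t i' j') = 0 :=
    fun i' j' => hz 0 1 i' j' (by decide)
  have hz2 : ∀ i' j', S.z 0 * (S.c s t 1 0 * S.c s t i' j') = 0 :=
    fun i' j' => hz 1 0 i' j' (by decide)
  have hp : E 0 0 0 0 + (1 - E 0 0 0 0) = 1 := by ring
  have h00 : ∀ i j, E 1 1 i j = - E 0 0 i j → y 0 0 * y i j = 0 → E 0 0 i j = 0 := by
    intro i j hij h
    refine S.offdiag_zero hs ht htn ho h2 hp ?_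
    rw [hyE 0 0, hyE i j, u1, hij] at h
    have h' := congrArg (S.z 0 * ·) h
    simp only [mul_add, add_mul, smul_mul_assoc, mul_smul_comm, o1, o2, o3, o4, hz1, hz2,
      smul_zero, add_zero, mul_zero] at h'
    rw [← h']
    simp only [mul_add, add_mul, smul_mul_assoc, mul_smul_comm]
  obtain ⟨ξ, e, hξ, hform⟩ := diag_units hE h1 (h00 0 1 u4 h01) (h00 1 0 u5 h10)
  refine ⟨s, t, ξ, e, hs, hsN, ht, htn, ho, h2, hξ, fun i j => ?_⟩
  rw [hyE i j]
  simp only [hform]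
  fin_cases e <;> fin_cases i <;> fin_cases j <;> simp

/-! ### Arithmetic constraints on the parameters -/

lemma z_N_pow_mul_x (a : Fin 2) (r : ℕ) :
    S.z a ^ (S.N * r) * S.x 0 a = S.nu a ^ r • S.x 0 a := by
  have h := S.z_N_mul_x 0 a
  rw [zero_add] at h
  induction r with
  | zero => simp
  | succ r ih => rw [mul_add, mul_one, pow_add, mul_assoc, h, mul_smul_comm, ih, smul_smul, pow_succ']

lemma z_pow_ne (hn : 2 < S.n) (a : Fin 2) (b : ℕ) : S.z a ^ b ≠ 0 := by
  intro h
  have h1 := S.z_N_pow_mul_x a b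
  rcases Nat.eq_zero_or_pos b with rfl | hb
  · rw [pow_zero] at h
    have := mul_one (S.x 0 a)
    rw [h, mul_zero] at this
    exact (S.x_indep hn).ne_zero (0, a) this.symm
  · have h2 : S.z a ^ (S.N * b) = 0 := by
      rw [mul_comm, pow_mul, h, zero_pow (by have := S.hN; omega)]
    rw [h2, zero_mul] at h1
    have h3 := (smul_eq_zero.1 h1.symm).resolve_left (pow_ne_zero _ (S.nu_ne a))
    exact (S.x_indep hn).ne_zero (0, a) h3

lemma z_pow_mul_chi_ne (hn : 2 < S.n) (i j : Fin 2) (b m : ℕ) :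
    S.z (i + j) ^ b * chi S.x i j m ≠ 0 := by
  induction m generalizing i j b with
  | zero => simpa [chi] using S.z_pow_ne hn (i + j) b
  | succ m ih =>
    intro h
    apply ih (i + 1) (j + 1) (b + 1)
    have h' := congrArg (S.x i j * ·) h
    simp only [mul_zero] at h'
    rw [← h', fin2_shift, chi, ← mul_assoc, ((S.x_comm_z i j).pow_right b).eq, mul_assoc,
      ← mul_assoc (S.x i j), sq_x, ← mul_assoc, ← pow_succ]

lemma z_pow_mul_N (a : Fin 2) (r : ℕ) {s : ℕ} (hs : 1 ≤ s) :
    S.z a ^ (S.N * r + s) = S.nu a ^ r • S.z a ^ s := by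
  induction r with
  | zero => simp
  | succ r ih =>
    rw [show S.N * (r + 1) + s = S.N + (S.N * r + s) by ring, S.z_pow_add_N a (by omega), ih,
      smul_smul, pow_succ']

lemma chi_c {s t : ℕ} (ho : Odd t) (i j : Fin 2) (r : ℕ) :
    chi (S.c s t) i j r = S.z (i + j) ^ (s * r) * chi S.x i j (t * r) := by
  induction r generalizing i j with
  | zero => simp [chi]
  | succ r ih =>
    rw [chi, ih, fin2_shift, c, mul_assoc, ← mul_assoc (chi _ _ _ _),
      ((S.chi_comm_z i j t).pow_right (s * r)).eq, mul_assoc, chi_odd_add S.x ho, ← mul_assoc,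
      ← pow_add, mul_add, mul_add, mul_one, mul_one, add_comm s, add_comm t]

/-- For odd `n` the relation at length `n` propagates to all multiples of `n`. -/
lemma chi_n_mul (hodd : Odd S.n) (i j : Fin 2) (r : ℕ) :
    chi S.x i j (S.n * r) = S.kap (i + j) ^ r • chi S.x (i + 1) (j + 1) (S.n * r) := by
  induction r generalizing i j with
  | zero => simp [chi]
  | succ r ih =>
    have h1 := chi_odd_add S.x hodd i j (S.n * r)
    have h2 := chi_odd_add S.x hodd (i + 1) (j + 1) (S.n * r)
    rw [fin2_two, fin2_two] at h2
    rw [show S.n * (r + 1) = S.n + S.n * r by ring, ← h1, ← h2, ih, S.chi_n, fin2_shift,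
      fin2_two, fin2_two, smul_mul_smul_comm, pow_succ']

lemma fin2_add (i j e : Fin 2) : (i + e) + (j + e) = i + j := by
  revert i j e; decide

lemma chi_gauge {y C : Fin 2 → Fin 2 → A} {ξ : k} (hξ : ξ ≠ 0)
    (hy : ∀ i j, y i j = gauge ξ i j • C i j) (i j : Fin 2) (r : ℕ) :
    chi y i j (2 * r + 1) = gauge ξ i j • chi C i j (2 * r + 1) := by
  induction r with
  | zero => simp [chi, hy]
  | succ r ih =>
    have hg : gauge ξ i j * gauge ξ (i + 1) (j + 1) = 1 := by
      clear ih
      fin_cases i <;> fin_cases j <;> simp [gauge, hξ]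
    have e : ∀ w : Fin 2 → Fin 2 → A, chi w i j (2 * (r + 1) + 1)
        = w i j * (w (i + 1) (j + 1) * chi w i j (2 * r + 1)) := by
      intro w
      rw [show 2 * (r + 1) + 1 = (2 * r + 1) + 1 + 1 by ring, chi, chi, fin2_two, fin2_two]
    rw [e y, e C, ih, hy i j, hy (i + 1) (j + 1), smul_mul_smul_comm, smul_mul_smul_comm,
      ← mul_assoc, hg, one_mul]

lemma chi_shift (C : Fin 2 → Fin 2 → A) (e i j : Fin 2) (r : ℕ) :
    chi (fun i j => C (i + e) (j + e)) i j r = chi C (i + e) (j + e) r := by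
  induction r generalizing i j with
  | zero => rfl
  | succ r ih => rw [chi, chi, ih, add_right_comm i, add_right_comm j]

lemma map_chi (f : A →ₐ[k] A) (x : Fin 2 → Fin 2 → A) (i j : Fin 2) (r : ℕ) :
    f (chi x i j r) = chi (fun i j => f (x i j)) i j r := by
  induction r generalizing i j with
  | zero => simp [chi]
  | succ r ih => rw [chi, chi, map_mul, ih]

section params

variable {f : A →ₐ[k] A} {s t : ℕ} {ξ : k} {e : Fin 2}

lemma map_z (ho : Odd t)
    (hf : ∀ i j, f (S.x i j) = gauge ξ i j • S.c s t (i + e) (j + e)) (a : Fin 2) :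
    f (S.z a) = gauge ξ 0 a ^ 2 • S.z a ^ (2 * s + t) := by
  rw [z, map_pow, hf, smul_pow, S.c_sq ho]
  rw [fin2_add, zero_add, z]

/-- `f (z 0) = z 0 ^ (2s + t)`, and `z 0` generates a cyclic group of order `N`. -/
lemma gcd_eq_one (hinj : Function.Injective f) (ho : Odd t)
    (hf : ∀ i j, f (S.x i j) = gauge ξ i j • S.c s t (i + e) (j + e)) :
    Nat.gcd (2 * s + t) S.N = 1 := by
  have hN := S.hN
  have hfz : f (S.z 0) = S.z 0 ^ (2 * s + t) := by
    rw [S.map_z ho hf]; simp [gauge]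
  by_contra hd
  obtain ⟨m', hm'⟩ := Nat.gcd_dvd_left (2 * s + t) S.N
  obtain ⟨N', hN'⟩ := Nat.gcd_dvd_right (2 * s + t) S.N
  have hm : 1 ≤ 2 * s + t := by have := ho.pos; omega
  generalize hdd : Nat.gcd (2 * s + t) S.N = d at *
  have hN'1 : 1 ≤ N' := by
    rcases Nat.eq_zero_or_pos N' with rfl | h
    · simp at hN'; omega
    · exact h
  have hm'1 : 1 ≤ m' := by
    rcases Nat.eq_zero_or_pos m' with rfl | h
    · simp at hm'; omega
    · exact h
  have hd2 : 2 ≤ d := by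
    rcases Nat.eq_zero_or_pos d with rfl | h
    · simp at hN'; omega
    · omega
  have hlt : N' < S.N := by nlinarith
  have hper : ∀ r, 1 ≤ r → S.z 0 ^ (S.N * r) = S.z 0 ^ S.N := by
    intro r hr
    obtain ⟨r, rfl⟩ := Nat.exists_eq_add_of_le' hr
    rw [mul_add, mul_one, S.z_pow_mul_N 0 r hN]
    simp [nu]
  have e1 : f (S.z 0 ^ N') = f (S.z 0 ^ S.N) := by
    rw [map_pow, map_pow, hfz, ← pow_mul, ← pow_mul, mul_comm _ S.N, hper _ hm,
      show (2 * s + t) * N' = S.N * m' by rw [hm', hN']; ring, hper _ hm'1]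
  have e2 := congrArg (S.proj (N', 0)) (hinj e1)
  have c1 : ∀ r, S.z 0 ^ r = S.c r 0 0 0 := fun r => by simp [c, chi]
  rw [c1, c1, S.proj_c hN'1 hlt.le (Nat.zero_le _), S.proj_c hN le_rfl (Nat.zero_le _), if_pos rfl,
    if_neg (by rw [Prod.mk.injEq]; omega)] at e2
  have e3 := congrArg (Coalgebra.counit (R := k)) e2
  rw [S.counit_c hN'1] at e3
  simp at e3

/-- Apply `f` to `z 0 ^ N + μ z 1 ^ N = 1` and compare the components in `z 1 ^ N A`. -/
lemma xi_pow (hn : 2 < S.n) (ho : Odd t)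
    (hf : ∀ i j, f (S.x i j) = gauge ξ i j • S.c s t (i + e) (j + e)) : ξ ^ (2 * S.N) = 1 := by
  have hN := S.hN
  have ht := ho.pos
  have h := congrArg f S.rel_z
  simp only [map_add, map_smul, map_pow, map_one, S.map_z ho hf] at h
  have h' := congrArg (· * S.z 1 ^ S.N) h
  have hz : (S.z 0 ^ (2 * s + t)) ^ S.N * S.z 1 ^ S.N = 0 := by
    rw [← pow_mul]
    exact S.z_pow_mul_z_pow (by decide) (Nat.mul_pos (by omega) hN) hN
  have hm : Odd (2 * s + t) := by rw [Nat.odd_add']; simp [ho]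
  have hμ2 : S.nu 1 * S.nu 1 = 1 := S.nu_sq 1
  have hμ : S.nu 1 = S.μ := by simp [nu]
  simp only [smul_pow, add_mul, smul_mul_assoc, one_mul, hz, smul_zero, zero_add] at h'
  rw [← pow_mul (S.z 1), ← pow_add, mul_comm _ S.N, S.z_pow_mul_N 1 _ hN] at h'
  obtain ⟨r, hr⟩ := hm
  have hν : S.nu 1 ^ (2 * s + t) = S.nu 1 := by
    rw [hr, pow_succ, pow_mul, pow_two, hμ2, one_pow, one_mul]
  rw [hν, smul_smul, smul_smul, ← hμ] at h'
  have hc : S.nu 1 * ((gauge ξ 0 1 ^ 2) ^ S.N * S.nu 1) = ξ ^ (2 * S.N) := by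
    have hg : gauge ξ 0 1 = ξ := by simp [gauge]
    rw [hg, ← pow_mul]
    linear_combination ξ ^ (2 * S.N) * hμ2
  rw [mul_assoc, hc] at h'
  have h'' : (ξ ^ (2 * S.N) - 1) • S.z 1 ^ S.N = 0 := by rw [sub_smul, one_smul, h', sub_self]
  exact sub_eq_zero.1 ((smul_eq_zero.1 h'').resolve_right (S.z_pow_ne hn 1 S.N))

/-- Apply `f` to `χ₂₁ⁿ = λ χ₁₂ⁿ`. -/
lemma xi_sq (hn : 2 < S.n) (ho : Odd t) (hodd : Odd S.n) (hξ : ξ ≠ 0)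
    (hf : ∀ i j, f (S.x i j) = gauge ξ i j • S.c s t (i + e) (j + e)) : ξ ^ 2 = 1 := by
  have h := congrArg f S.rel_chi1
  obtain ⟨r, hr⟩ := hodd
  have hg : ∀ i j, f (chi S.x i j S.n)
      = gauge ξ i j • (S.z (i + j) ^ (s * S.n) * chi S.x (i + e) (j + e) (t * S.n)) := by
    intro i j
    rw [map_chi]
    have h1 := chi_gauge (C := fun i j => S.c s t (i + e) (j + e)) hξ hf i j r
    rw [← hr] at h1
    rw [h1, chi_shift, S.chi_c ho, fin2_add]
  rw [map_smul, hg, hg, mul_comm t] at h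
  have h2 := S.chi_n_mul ⟨r, hr⟩ (1 + e) (0 + e) t
  have e1 : (1 + e) + (0 + e) = 1 := fin2_add 1 0 e
  have e2 : 1 + e + 1 = 0 + e := by clear * -; revert e; decide
  have e3 : 0 + e + 1 = 1 + e := by clear * -; revert e; decide
  have hk : S.kap 1 ^ t = S.lam := by
    obtain ⟨q, rfl⟩ := ho
    rw [pow_succ, pow_mul, pow_two, S.kap_sq, one_pow, one_mul]
    simp [kap]
  rw [e1, e2, e3, hk] at h2
  have hl : S.lam ≠ 0 := by rcases S.hlam with h | h <;> simp [h]
  rw [h2, mul_smul_comm, smul_smul, smul_smul, ← sub_eq_zero] at h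
  simp only [show (1 : Fin 2) + 0 = 1 from rfl, show (0 : Fin 2) + 1 = 1 from rfl] at h
  rw [← sub_smul] at h
  have hne := S.z_pow_mul_chi_ne hn (0 + e) (1 + e) (s * S.n) (S.n * t)
  rw [show (0 + e) + (1 + e) = 1 from fin2_add 0 1 e] at hne
  have h3 := (smul_eq_zero.1 h).resolve_right hne
  have g1 : gauge ξ 1 0 = ξ⁻¹ := by simp [gauge]
  have g2 : gauge ξ 0 1 = ξ := by simp [gauge]
  rw [g1, g2] at h3
  have h4 : S.lam * (ξ⁻¹ - ξ) = 0 := by linear_combination h3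
  have h5 := sub_eq_zero.1 ((mul_eq_zero.1 h4).resolve_left hl)
  rw [pow_two]
  nth_rewrite 2 [← h5]
  exact mul_inv_cancel₀ hξ

end params

/-! ### Maps in standard form are coalgebra maps -/

lemma comul_standard {f : A →ₐ[k] A} {s t : ℕ} {ξ : k} {e : Fin 2} (hs : 1 ≤ s) (hξ : ξ ≠ 0)
    (hf : ∀ i j, f (S.x i j) = gauge ξ i j • S.c s t (i + e) (j + e)) (a : A) :
    Coalgebra.comul (R := k) (f a)
      = TensorProduct.map f.toLinearMap f.toLinearMap (Coalgebra.comul (R := k) a) := by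
  have h : (Bialgebra.comulAlgHom k A).comp f
      = (Algebra.TensorProduct.map f f).comp (Bialgebra.comulAlgHom k A) := by
    refine AlgHom.ext_of_adjoin_eq_top S.gen ?_
    rintro _ ⟨⟨i, j⟩, rfl⟩
    simp only [AlgHom.comp_apply, Bialgebra.comulAlgHom_apply, S.comul_x, map_add,
      Algebra.TensorProduct.map_tmul, hf, map_smul, S.comul_c hs, TensorProduct.smul_tmul_smul]
    have hg : ∀ l, gauge ξ i l * gauge ξ l j = gauge ξ i j := by
      intro l
      fin_cases i <;> fin_cases j <;> fin_cases l <;> simp [gauge, hξ]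
    rw [hg, hg, ← smul_add]
    congr 1
    fin_cases e
    · simp
    · simp [add_comm]
  exact congrArg (fun g => g a) h

lemma counit_standard {f : A →ₐ[k] A} {s t : ℕ} {ξ : k} {e : Fin 2} (hs : 1 ≤ s)
    (hf : ∀ i j, f (S.x i j) = gauge ξ i j • S.c s t (i + e) (j + e)) (a : A) :
    Coalgebra.counit (R := k) (f a) = Coalgebra.counit (R := k) a := by
  have h : (Bialgebra.counitAlgHom k A).comp f = Bialgebra.counitAlgHom k A := by
    refine AlgHom.ext_of_adjoin_eq_top S.gen ?_
    rintro _ ⟨⟨i, j⟩, rfl⟩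
    simp only [AlgHom.comp_apply, Bialgebra.counitAlgHom_apply, hf, map_smul, S.counit_c hs,
      S.counit_x, add_left_inj]
    split_ifs with h <;> simp [gauge, h]
  exact congrArg (fun g => g a) h

/-- The standard form, spelled out on the four generators. -/
lemma standard_iff (y : Fin 2 → Fin 2 → A) (s t : ℕ) (ξ : k) :
    (∃ e : Fin 2, ∀ i j, y i j = gauge ξ i j • S.c s t (i + e) (j + e)) ↔
      ((y 0 0 = S.x 0 0 ^ (2 * s) * chi S.x 0 0 t ∧
        y 1 1 = S.x 0 0 ^ (2 * s) * chi S.x 1 1 t ∧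
        y 0 1 = ξ • (S.x 0 1 ^ (2 * s) * chi S.x 0 1 t) ∧
        y 1 0 = ξ⁻¹ • (S.x 0 1 ^ (2 * s) * chi S.x 1 0 t))
      ∨ (y 0 0 = S.x 0 0 ^ (2 * s) * chi S.x 1 1 t ∧
        y 1 1 = S.x 0 0 ^ (2 * s) * chi S.x 0 0 t ∧
        y 0 1 = ξ • (S.x 0 1 ^ (2 * s) * chi S.x 1 0 t) ∧
        y 1 0 = ξ⁻¹ • (S.x 0 1 ^ (2 * s) * chi S.x 0 1 t))) := by
  simp only [Fin.exists_fin_two, Fin.forall_fin_two, gauge, c, z, pow_mul]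
  simp
  tauto

end Suzuki

/-- for `n > 2`, a bijective `k`-linear map `φ` is a Hopf algebra
automorphism of `A_{Nn}^{μλ}` iff it is the algebra map `Ψ_ξ^{s,t}` or `Φ_ξ^{s,t}`
for suitable `s, t, ξ`. -/
theorem stmt17 (k A : Type*) [Field k] [CharZero k] [IsAlgClosed k]
    [Ring A] [HopfAlgebra k A] (S : Suzuki k A) (hn : 2 < S.n)
    (φ : A ≃ₗ[k] A) :
    IsHopfAut k φ
      ↔ (∀ a b : A, φ (a * b) = φ a * φ b) ∧ φ 1 = 1 ∧
        ∃ (s t : ℕ) (ξ : k),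
          1 ≤ s ∧ s ≤ S.N ∧ 1 ≤ t ∧ t ≤ S.n - 1 ∧ Odd t ∧ 2 * t ≠ S.n ∧
          Nat.gcd (2 * s + t) S.N = 1 ∧
          (Even S.n → ξ ^ (2 * S.N) = 1) ∧ (Odd S.n → ξ ^ 2 = 1) ∧
          ((φ (S.x 0 0) = S.x 0 0 ^ (2 * s) * chi S.x 0 0 t ∧
            φ (S.x 1 1) = S.x 0 0 ^ (2 * s) * chi S.x 1 1 t ∧
            φ (S.x 0 1) = ξ • (S.x 0 1 ^ (2 * s) * chi S.x 0 1 t) ∧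
            φ (S.x 1 0) = ξ⁻¹ • (S.x 0 1 ^ (2 * s) * chi S.x 1 0 t))
          ∨ (φ (S.x 0 0) = S.x 0 0 ^ (2 * s) * chi S.x 1 1 t ∧
            φ (S.x 1 1) = S.x 0 0 ^ (2 * s) * chi S.x 0 0 t ∧
            φ (S.x 0 1) = ξ • (S.x 0 1 ^ (2 * s) * chi S.x 1 0 t) ∧
            φ (S.x 1 0) = ξ⁻¹ • (S.x 0 1 ^ (2 * s) * chi S.x 0 1 t))) := by
  have hN := S.hN
  constructor
  · rintro ⟨hmul, hone, hcomul, hcounit⟩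
    refine ⟨hmul, hone, ?_⟩
    let f : A →ₐ[k] A := AlgHom.ofLinearMap φ.toLinearMap hone hmul
    have hf : ∀ a, f a = φ a := fun _ => rfl
    have hy : ∀ i j, Coalgebra.comul (R := k) (φ (S.x i j))
        = φ (S.x i 0) ⊗ₜ[k] φ (S.x 0 j) + φ (S.x i 1) ⊗ₜ[k] φ (S.x 1 j) := by
      intro i j
      rw [hcomul, S.comul_x]
      simp
    have hzero : ∀ i j i' j' : Fin 2, i + j ≠ i' + j' → φ (S.x i j) * φ (S.x i' j') = 0 := by
      intro i j i' j' h
      rw [← hmul, S.x_mul_x h, map_zero]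
    obtain ⟨s, t, ξ, e, hs, hsN, ht, htn, ho, h2, hξ, hform⟩ :=
      S.standard_form (y := fun i j => φ (S.x i j)) hy
        (fun i j => by rw [hcounit, S.counit_x])
        ((S.x_indep hn).map' φ.toLinearMap φ.ker)
        (by
          rw [← hmul, ← hmul]
          exact fun h => S.x_noncomm hn (φ.injective h))
        (hzero 0 0 0 1 (by decide)) (hzero 0 0 1 0 (by decide))
    have hff : ∀ i j, f (S.x i j) = Suzuki.gauge ξ i j • S.c s t (i + e) (j + e) := hform
    exact ⟨s, t, ξ, hs, hsN, ht, by omega, ho, h2, S.gcd_eq_one φ.injective ho hff,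
      fun _ => S.xi_pow hn ho hff, fun hodd => S.xi_sq hn ho hodd hξ hff,
      (S.standard_iff (fun i j => φ (S.x i j)) s t ξ).1 ⟨e, hform⟩⟩
  · rintro ⟨hmul, hone, s, t, ξ, hs, -, -, -, -, -, -, heven, hodd, hform⟩
    let f : A →ₐ[k] A := AlgHom.ofLinearMap φ.toLinearMap hone hmul
    obtain ⟨e, he⟩ := (S.standard_iff (fun i j => φ (S.x i j)) s t ξ).2 hform
    have hξ : ξ ≠ 0 := by
      rintro rfl
      rcases Nat.even_or_odd S.n with h | h
      · have := heven h
        rw [zero_pow (by omega)] at this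
        exact zero_ne_one this
      · have := hodd h
        rw [zero_pow (by omega)] at this
        exact zero_ne_one this
    have hff : ∀ i j, f (S.x i j) = Suzuki.gauge ξ i j • S.c s t (i + e) (j + e) := he
    exact ⟨hmul, hone, S.comul_standard hs hξ hff, S.counit_standard hs hff⟩
end
end
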